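/- (Theorem 1, D-bound without power constraint.) For every n ≥ 1, every random vector X in ℝⁿ with E[‖X‖²] < ∞, and all 0 < snr ≤ snr0, the MMSE satisfies mmse(X, snr) ≤ mmse(X, snr0) + (n+2)·(1/snr − 1/snr0). -/

import Mathlib

open MeasureTheory ProbabilityTheory Real

noncomputable section

/-- The observation `Y_snr = √snr · X + Z` as a random vector in `ℝⁿ` (modeled as `Fin n → ℝ`). -/
def obs {Ω : Type*} {n : ℕ} (X Z : Ω → Fin n → ℝ) (snr : ℝ) : Ω → Fin n → ℝ :=
  fun ω i => Real.sqrt snr * X ω i + Z ω i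

/-- The σ-algebra generated by the observation `Y_snr`. -/
def obsSigma {Ω : Type*} [MeasurableSpace Ω] {n : ℕ} (X Z : Ω → Fin n → ℝ) (snr : ℝ) :
    MeasurableSpace Ω :=
  MeasurableSpace.comap (obs X Z snr) inferInstance

/-- Componentwise conditional expectation of a random vector given a sub-σ-algebra `m`. -/
def ceVec {Ω : Type*} [MeasurableSpace Ω] {n : ℕ} (μ : Measure Ω) (m : MeasurableSpace Ω)
    (V : Ω → Fin n → ℝ) : Ω → Fin n → ℝ :=
  fun ω i => (μ[fun ω' => V ω' i | m]) ω

/-- `mmse(X, snr) = (1/n) · E[‖X − E[X | Y_snr]‖²]`. -/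
def mmseV {Ω : Type*} [MeasurableSpace Ω] {n : ℕ} (μ : Measure Ω) (X Z : Ω → Fin n → ℝ)
    (snr : ℝ) : ℝ :=
  (1 / (n : ℝ)) * ∫ ω, ∑ i, (X ω i - ceVec μ (obsSigma X Z snr) X ω i) ^ 2 ∂μ

open scoped ENNReal NNReal Topology

/-- The standard Gaussian measure on `ℝⁿ`, modeled as `Fin n → ℝ`. -/
abbrev stdGauss (n : ℕ) : Measure (Fin n → ℝ) := Measure.pi fun _ : Fin n => gaussianReal 0 1

/-- The density at `y` of the standard Gaussian shifted by `x`, relative to the standard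
Gaussian. -/
def shiftDensity {n : ℕ} (x y : Fin n → ℝ) : ℝ := Real.exp (x ⬝ᵥ y - x ⬝ᵥ x / 2)

lemma shiftDensity_pos {n : ℕ} (x y : Fin n → ℝ) : 0 < shiftDensity x y := Real.exp_pos _

@[fun_prop]
lemma measurable_dotProduct {α : Type*} [MeasurableSpace α] {n : ℕ} {f g : α → Fin n → ℝ}
    (hf : Measurable f) (hg : Measurable g) : Measurable fun a => f a ⬝ᵥ g a := by
  unfold dotProduct
  fun_prop

@[fun_prop]
lemma measurable_shiftDensity {α : Type*} [MeasurableSpace α] {n : ℕ} {f g : α → Fin n → ℝ}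
    (hf : Measurable f) (hg : Measurable g) : Measurable fun a => shiftDensity (f a) (g a) := by
  unfold shiftDensity
  fun_prop

/-- A product of measures with densities is the product measure with the product density. -/
lemma pi_withDensity_ofReal {n : ℕ} (ν : Measure ℝ) [IsProbabilityMeasure ν]
    (f : Fin n → ℝ → ℝ) (hf0 : ∀ i x, 0 ≤ f i x) (hf : ∀ i, Integrable (f i) ν) :
    Measure.pi (fun i => ν.withDensity fun x => ENNReal.ofReal (f i x)) =
      (Measure.pi fun _ : Fin n => ν).withDensity
        fun y => ENNReal.ofReal (∏ i, f i (y i)) := by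
  have (i : Fin n) : IsFiniteMeasure (ν.withDensity fun x => ENNReal.ofReal (f i x)) :=
    isFiniteMeasure_withDensity_ofReal (hf i).2
  refine Measure.pi_eq fun s hs => ?_
  have hint : Integrable (fun y : Fin n → ℝ => ∏ i, f i (y i)) (Measure.pi fun _ => ν) :=
    Integrable.fintype_prod hf
  have hind : (fun y : Fin n → ℝ => (Set.univ.pi s).indicator (fun y => ∏ i, f i (y i)) y) =
      fun y => ∏ i, (s i).indicator (f i) (y i) := by
    funext y
    by_cases hy : y ∈ Set.univ.pi s
    · rw [Set.indicator_of_mem hy]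
      exact Finset.prod_congr rfl fun i _ => (Set.indicator_of_mem (hy i trivial) _).symm
    · rw [Set.indicator_of_notMem hy]
      simp only [Set.mem_pi, not_forall] at hy
      obtain ⟨i, _, hi⟩ := hy
      exact (Finset.prod_eq_zero (Finset.mem_univ i) (Set.indicator_of_notMem hi _)).symm
  rw [withDensity_apply _ (MeasurableSet.univ_pi hs),
    ← ofReal_integral_eq_lintegral_ofReal hint.integrableOn
      (Filter.Eventually.of_forall fun y => Finset.prod_nonneg fun i _ => hf0 i _),
    ← integral_indicator (MeasurableSet.univ_pi hs), hind,
    integral_fintype_prod_eq_prod (fun i => (s i).indicator (f i)),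
    ENNReal.ofReal_prod_of_nonneg
      fun i _ => integral_nonneg fun x => Set.indicator_nonneg (fun x _ => hf0 i x) x]
  refine Finset.prod_congr rfl fun i _ => ?_
  rw [withDensity_apply _ (hs i), integral_indicator (hs i),
    ← ofReal_integral_eq_lintegral_ofReal (hf i).integrableOn
      (Filter.Eventually.of_forall fun y => hf0 i _)]

lemma gaussianReal_map_add_eq_withDensity (a : ℝ) :
    (gaussianReal 0 1).map (fun z => z + a) =
      (gaussianReal 0 1).withDensity fun y => ENNReal.ofReal (Real.exp (a * y - a * a / 2)) := by
  rw [gaussianReal_map_add_const, gaussianReal_of_var_ne_zero _ one_ne_zero,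
    gaussianReal_of_var_ne_zero _ one_ne_zero,
    ← withDensity_mul _ (by fun_prop) (by fun_prop)]
  congr 1
  funext y
  simp only [Pi.mul_apply, gaussianPDF, gaussianPDFReal]
  rw [← ENNReal.ofReal_mul (by positivity), mul_assoc (√_)⁻¹, ← Real.exp_add]
  congr 3
  push_cast
  ring

lemma integrable_exp_shift_gaussianReal (a : ℝ) :
    Integrable (fun y => Real.exp (a * y - a * a / 2)) (gaussianReal 0 1) := by
  simp only [Real.exp_sub]
  exact (integrable_exp_mul_gaussianReal a).div_const _

lemma prod_exp_eq_shiftDensity {n : ℕ} (x y : Fin n → ℝ) :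
    ∏ i, Real.exp (x i * y i - x i * x i / 2) = shiftDensity x y := by
  rw [← Real.exp_sum, shiftDensity]
  simp [dotProduct, Finset.sum_sub_distrib, Finset.sum_div]

/-- Cameron–Martin for the standard Gaussian on `ℝⁿ`. -/
lemma stdGauss_map_add {n : ℕ} (x : Fin n → ℝ) :
    (stdGauss n).map (fun z => x + z) =
      (stdGauss n).withDensity fun y => ENNReal.ofReal (shiftDensity x y) := by
  have h := pi_withDensity_ofReal (gaussianReal 0 1)
    (fun (i : Fin n) y => Real.exp (x i * y - x i * x i / 2))
    (fun i y => (Real.exp_pos _).le) fun i => integrable_exp_shift_gaussianReal _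
  simp only [prod_exp_eq_shiftDensity] at h
  rw [← h]
  simp only [← gaussianReal_map_add_eq_withDensity]
  rw [← Measure.pi_map_pi fun i => by fun_prop]
  congr 1
  funext z i
  simp [add_comm]

lemma lintegral_shiftDensity_mul {n : ℕ} (x : Fin n → ℝ) {F : (Fin n → ℝ) → ℝ≥0∞}
    (hF : Measurable F) :
    ∫⁻ y, ENNReal.ofReal (shiftDensity x y) * F y ∂stdGauss n =
      ∫⁻ z, F (x + z) ∂stdGauss n := by
  rw [← lintegral_map hF (by fun_prop), stdGauss_map_add,
    lintegral_withDensity_eq_lintegral_mul _ (by fun_prop) hF]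
  rfl

lemma integrable_shiftDensity {n : ℕ} (x : Fin n → ℝ) :
    Integrable (shiftDensity x) (stdGauss n) := by
  have := Integrable.fintype_prod (μ := fun _ : Fin n => gaussianReal 0 1)
    (f := fun i y => Real.exp (x i * y - x i * x i / 2))
    fun i => integrable_exp_shift_gaussianReal _
  simpa only [prod_exp_eq_shiftDensity] using this

lemma integral_shiftDensity {n : ℕ} (x : Fin n → ℝ) :
    ∫ y, shiftDensity x y ∂stdGauss n = 1 := by
  rw [integral_eq_lintegral_of_nonneg_ae
    (Filter.Eventually.of_forall fun y => (shiftDensity_pos x y).le)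
    (integrable_shiftDensity x).1]
  have := lintegral_shiftDensity_mul x (F := fun _ => 1) measurable_const
  simp only [mul_one] at this
  simp [this]

lemma gaussianReal_prod_map_add {c d : ℝ} (h : c ^ 2 + d ^ 2 = 1) :
    ((gaussianReal 0 1).prod (gaussianReal 0 1)).map (fun p : ℝ × ℝ => c * p.1 + d * p.2) =
      gaussianReal 0 1 := by
  have h1 : ((gaussianReal 0 1).prod (gaussianReal 0 1)).map (fun p : ℝ × ℝ => c * p.1) =
      gaussianReal 0 (.mk (c ^ 2) (sq_nonneg _)) := by
    have := Measure.map_map (μ := (gaussianReal 0 1).prod (gaussianReal 0 1))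
      (g := fun y => c * y) (by fun_prop) (measurable_fst (α := ℝ) (β := ℝ))
    refine this.symm.trans ?_
    simp [gaussianReal_map_const_mul, Measure.map_fst_prod]
  have h2 : ((gaussianReal 0 1).prod (gaussianReal 0 1)).map (fun p : ℝ × ℝ => d * p.2) =
      gaussianReal 0 (.mk (d ^ 2) (sq_nonneg _)) := by
    have := Measure.map_map (μ := (gaussianReal 0 1).prod (gaussianReal 0 1))
      (g := fun y => d * y) (by fun_prop) (measurable_snd (α := ℝ) (β := ℝ))
    refine this.symm.trans ?_
    simp [gaussianReal_map_const_mul, Measure.map_snd_prod]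
  have hi : IndepFun (fun p : ℝ × ℝ => c * p.1) (fun p : ℝ × ℝ => d * p.2)
      ((gaussianReal 0 1).prod (gaussianReal 0 1)) :=
    indepFun_prod (X := fun y => c * y) (Y := fun y => d * y) (by fun_prop) (by fun_prop)
  have := gaussianReal_add_gaussianReal_of_indepFun hi h1 h2
  refine this.trans ?_
  have hv : (NNReal.mk (c ^ 2) (sq_nonneg _) + NNReal.mk (d ^ 2) (sq_nonneg _)) = 1 :=
    NNReal.eq (by simpa using h)
  rw [hv, add_zero]

/-- Rotation invariance of the standard Gaussian. -/
lemma stdGauss_prod_map_add {n : ℕ} {c d : ℝ} (h : c ^ 2 + d ^ 2 = 1) :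
    ((stdGauss n).prod (stdGauss n)).map
      (fun p : (Fin n → ℝ) × (Fin n → ℝ) => c • p.1 + d • p.2) = stdGauss n := by
  have hp := (measurePreserving_arrowProdEquivProdArrow ℝ ℝ (Fin n)
    (fun _ => gaussianReal 0 1) (fun _ => gaussianReal 0 1)).map_eq
  rw [← hp, Measure.map_map (by fun_prop) (by fun_prop)]
  have hm : ∀ _ : Fin n, SigmaFinite (((gaussianReal 0 1).prod (gaussianReal 0 1)).map
      (fun p : ℝ × ℝ => c * p.1 + d * p.2)) := fun _ => by
    rw [gaussianReal_prod_map_add h]; infer_instance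
  have := Measure.pi_map_pi (ι := Fin n)
    (μ := fun _ => (gaussianReal 0 1).prod (gaussianReal 0 1))
    (f := fun _ p => c * p.1 + d * p.2) fun i => by fun_prop
  rw [gaussianReal_prod_map_add h] at this
  exact this

lemma integrable_exp_sq_gaussianReal {c : ℝ} (hc : c < 1 / 2) :
    Integrable (fun z => Real.exp (c * z ^ 2)) (gaussianReal 0 1) := by
  rw [gaussianReal_of_var_ne_zero _ one_ne_zero, integrable_withDensity_iff (by fun_prop)
    (Filter.Eventually.of_forall fun _ => gaussianPDF_lt_top)]
  refine ((integrable_exp_neg_mul_sq (b := 1 / 2 - c) (by linarith)).const_mul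
    (√(2 * π))⁻¹).congr (Filter.Eventually.of_forall fun z => ?_)
  simp only [toReal_gaussianPDF, gaussianPDFReal]
  rw [mul_left_comm, ← Real.exp_add]
  simp only [NNReal.coe_one, mul_one]
  congr 2
  ring

lemma integrable_exp_dotProduct_self {n : ℕ} {c : ℝ} (hc : c < 1 / 2) :
    Integrable (fun z => Real.exp (c * (z ⬝ᵥ z))) (stdGauss n) := by
  refine (Integrable.fintype_prod (μ := fun _ : Fin n => gaussianReal 0 1)
    fun _ => integrable_exp_sq_gaussianReal hc).congr (Filter.Eventually.of_forall fun z => ?_)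
  simp [← Real.exp_sum, dotProduct, Finset.mul_sum, pow_two]

lemma integral_sq_gaussianReal : ∫ z, z ^ 2 ∂gaussianReal 0 1 = 1 := by
  have := variance_id_gaussianReal (μ := 0) (v := 1)
  rw [variance_of_integral_eq_zero (by fun_prop) (by simp)] at this
  simpa using this

lemma integral_pow_four_gaussianReal : ∫ z, z ^ 4 ∂gaussianReal 0 1 = 3 := by
  rw [integral_gaussianReal_eq_integral_smul one_ne_zero]
  have h1 : ∀ z : ℝ, gaussianPDFReal 0 1 z • z ^ 4 =
      (√(2 * π))⁻¹ * ((fun t : ℝ => t ^ (4 : ℝ) * Real.exp (-(1 / 2) * t ^ (2 : ℝ))) |z|) := by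
    intro z
    have e4 : |z| ^ (4 : ℝ) = z ^ 4 := by
      rw [show (4 : ℝ) = ((4 : ℕ) : ℝ) by norm_num, Real.rpow_natCast, Even.pow_abs (by decide)]
    have e2 : |z| ^ (2 : ℝ) = z ^ 2 := by
      rw [show (2 : ℝ) = ((2 : ℕ) : ℝ) by norm_num, Real.rpow_natCast, sq_abs]
    simp only [gaussianPDFReal, e4, e2, NNReal.coe_one, mul_one, sub_zero, smul_eq_mul]
    rw [show -z ^ 2 / 2 = -(1 / 2) * z ^ 2 by ring]
    ring
  simp only [h1]
  rw [integral_const_mul, integral_comp_abs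
    (f := fun t : ℝ => t ^ (4 : ℝ) * Real.exp (-(1 / 2) * t ^ (2 : ℝ))),
    integral_rpow_mul_exp_neg_mul_rpow two_pos (by norm_num) (by norm_num),
    show ((4 : ℝ) + 1) / 2 = ((2 : ℕ) : ℝ) + 1 / 2 by norm_num, Real.Gamma_nat_add_half,
    show -((4 : ℝ) + 1) / 2 = -(2 + 1 / 2) by norm_num, one_div (2 : ℝ),
    Real.inv_rpow two_pos.le, Real.rpow_neg two_pos.le, inv_inv, Real.rpow_add two_pos,
    inv_eq_one_div (2 : ℝ), ← Real.sqrt_eq_rpow, Real.sqrt_mul two_pos.le]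
  have hd : (Nat.doubleFactorial (2 * 2 - 1) : ℝ) = 3 := by norm_num [Nat.doubleFactorial]
  rw [hd]
  norm_num
  field_simp

lemma memLp_sq_coord {n : ℕ} (i : Fin n) :
    MemLp (fun z : Fin n → ℝ => z i ^ 2) 2 (stdGauss n) := by
  have h : MemLp (fun z : ℝ => z ^ 2) 2 (gaussianReal 0 1) := by
    rw [memLp_two_iff_integrable_sq (by fun_prop)]
    have := (memLp_id_gaussianReal' (μ := 0) (v := 1) ((4 : ℕ) : ℝ≥0∞)
      (by norm_num)).integrable_norm_pow (by norm_num)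
    refine this.congr (Filter.Eventually.of_forall fun z => ?_)
    simp only [id_eq, Real.norm_eq_abs, ← pow_mul]
    exact Even.pow_abs (by decide) z
  exact h.comp_measurePreserving (measurePreserving_eval _ i)

lemma integral_sq_mul_sq {n : ℕ} (i j : Fin n) :
    ∫ z, z i ^ 2 * z j ^ 2 ∂stdGauss n = if i = j then 3 else 1 := by
  split_ifs with hij
  · subst hij
    rw [← integral_pow_four_gaussianReal, ← (measurePreserving_eval
      (fun _ : Fin n => gaussianReal 0 1) i).map_eq,
      integral_map (measurable_pi_apply i).aemeasurable (by fun_prop)]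
    exact integral_congr_ae (Filter.Eventually.of_forall fun z => by simp; ring)
  · have hi := (iIndepFun_pi (μ := fun _ : Fin n => gaussianReal 0 1)
      (X := fun _ x => x ^ 2) fun i => by fun_prop).indepFun hij
    rw [hi.integral_fun_mul_eq_mul_integral
      (by exact (memLp_sq_coord i).1) (by exact (memLp_sq_coord j).1)]
    have (k : Fin n) : ∫ z, z k ^ 2 ∂stdGauss n = 1 := by
      rw [← integral_sq_gaussianReal, ← (measurePreserving_eval
        (fun _ : Fin n => gaussianReal 0 1) k).map_eq,
        integral_map (measurable_pi_apply k).aemeasurable (by fun_prop)]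
    rw [this, this, one_mul]

/-- The fourth moment of the norm of a standard Gaussian vector. -/
lemma integral_dotProduct_self_sq {n : ℕ} :
    ∫ z, (z ⬝ᵥ z) ^ 2 ∂stdGauss n = n * (n + 2) := by
  have h : ∀ z : Fin n → ℝ, (z ⬝ᵥ z) ^ 2 = ∑ i, ∑ j, z i ^ 2 * z j ^ 2 := fun z => by
    simp only [dotProduct, ← pow_two]
    rw [pow_two, Finset.sum_mul_sum]
  simp only [h]
  have hint : ∀ i j : Fin n, Integrable (fun z : Fin n → ℝ => z i ^ 2 * z j ^ 2) (stdGauss n) :=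
    fun i j => (memLp_sq_coord i).integrable_mul (memLp_sq_coord j)
  rw [integral_finsetSum _ fun i _ => integrable_finsetSum _ fun j _ => hint i j]
  simp_rw [fun i => integral_finsetSum Finset.univ fun j _ => hint i j, integral_sq_mul_sq]
  have (i : Fin n) : ∑ j : Fin n, (if i = j then (3 : ℝ) else 1) = n + 2 := by
    have : ∀ j, (if i = j then (3 : ℝ) else 1) = 1 + if i = j then 2 else 0 := fun j => by
      split_ifs <;> norm_num
    simp [this, Finset.sum_add_distrib]
  simp [this, mul_add]

lemma mul_exp_sub_one_le {s r a b : ℝ} (hs : 0 ≤ s) (hr : 0 ≤ r) (ha : 0 ≤ a) (hb : 0 ≤ b)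
    (hrab : r ≤ 2 * a + 2 * b) :
    r * (exp (s * r / 2) - 1) ≤
      4 * a * (exp (2 * s * a) - 1) + 4 * b * (exp (2 * s * b) - 1) := by
  have key : ∀ u : ℝ, 0 ≤ u → r ≤ 4 * u →
      r * (exp (s * r / 2) - 1) ≤ 4 * u * (exp (2 * s * u) - 1) := fun u hu h => by
    have h1 : 0 ≤ exp (s * r / 2) - 1 := by
      linarith [add_one_le_exp (s * r / 2), mul_nonneg hs hr]
    have h2 : exp (s * r / 2) ≤ exp (2 * s * u) := exp_le_exp.2 (by nlinarith)
    exact mul_le_mul h (by linarith) h1 (by linarith)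
  have nn : ∀ u : ℝ, 0 ≤ u → 0 ≤ 4 * u * (exp (2 * s * u) - 1) := fun u hu =>
    mul_nonneg (by linarith) (by
      have : 0 ≤ s * u := mul_nonneg hs hu
      linarith [add_one_le_exp (2 * s * u)])
  rcases le_total a b with h | h
  · linarith [key b hb (by linarith), nn a ha]
  · linarith [key a ha (by linarith), nn b hb]

lemma tangent_le_mul_exp_sub_one {s a b : ℝ} (hs : 0 ≤ s) (ha : 0 ≤ a) :
    b * (exp (s * b) - 1) + (exp (s * b) - 1 + b * s * exp (s * b)) * (a - b) ≤
      a * (exp (s * a) - 1) := by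
  have h1 : exp (s * b) * (1 + s * (a - b)) ≤ exp (s * a) := by
    have := mul_le_mul_of_nonneg_left (add_one_le_exp (s * (a - b))) (exp_pos (s * b)).le
    rw [← exp_add, show s * b + s * (a - b) = s * a by ring] at this
    linarith
  have h2 := mul_le_mul_of_nonneg_left h1 ha
  have h3 : 0 ≤ s * exp (s * b) * (a - b) ^ 2 := by positivity
  nlinarith

lemma eight_mul_exp_sub_one_le {s a : ℝ} (hs : 0 ≤ s) (ha : 0 ≤ a) :
    8 * (a * (exp (2 * s * a) - 1)) ≤ a * (exp (16 * s * a) - 1) := by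
  have h1 : 0 ≤ exp (2 * s * a) - 1 := by
    have : 0 ≤ s * a := mul_nonneg hs ha
    linarith [add_one_le_exp (2 * s * a)]
  have h := one_add_mul_le_pow (a := exp (2 * s * a) - 1) (by linarith) 8
  rw [add_sub_cancel, ← exp_nat_mul] at h
  rw [show 16 * s * a = ((8 : ℕ) : ℝ) * (2 * s * a) by push_cast; ring]
  push_cast at h ⊢
  nlinarith

lemma exp_mul_monotone_tangent {s a ρ : ℝ} (hs : 0 ≤ s) (ha : 0 ≤ a) (hρ : 0 ≤ ρ) :
    exp (s * ρ) * (a * exp (16 * s * a)) + ρ * exp (16 * s * ρ) * (exp (s * ρ) * s) * (a - ρ) ≤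
      a * exp (17 * s * a) := by
  have mono : ∀ u v : ℝ, 0 ≤ u → u ≤ v → u * exp (16 * s * u) ≤ v * exp (16 * s * v) :=
    fun u v hu huv => mul_le_mul huv (exp_le_exp.2 (by nlinarith)) (exp_pos _).le (by linarith)
  have monoe : ∀ u v : ℝ, u ≤ v → exp (s * u) ≤ exp (s * v) :=
    fun u v huv => exp_le_exp.2 (by nlinarith)
  have e17 : a * exp (17 * s * a) = (a * exp (16 * s * a)) * exp (s * a) := by
    rw [mul_assoc a, ← exp_add, show 16 * s * a + s * a = 17 * s * a by ring]
  have h1 : 0 ≤ (a * exp (16 * s * a) - ρ * exp (16 * s * ρ)) * (exp (s * a) - exp (s * ρ)) := by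
    rcases le_total a ρ with h | h
    · exact mul_nonneg_of_nonpos_of_nonpos (by linarith [mono a ρ ha h])
        (by linarith [monoe a ρ h])
    · exact mul_nonneg (by linarith [mono ρ a hρ h]) (by linarith [monoe ρ a h])
  have h2 : exp (s * ρ) * (1 + s * (a - ρ)) ≤ exp (s * a) := by
    have := mul_le_mul_of_nonneg_left (add_one_le_exp (s * (a - ρ))) (exp_pos (s * ρ)).le
    rw [← exp_add, show s * ρ + s * (a - ρ) = s * a by ring] at this
    linarith
  have h3 := mul_le_mul_of_nonneg_left h2
    (show 0 ≤ ρ * exp (16 * s * ρ) by positivity)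
  rw [e17]
  nlinarith

lemma sq_integral_le_integral_sq {α : Type*} [MeasurableSpace α] {Q : Measure α}
    [IsProbabilityMeasure Q] {g : α → ℝ} (hg : Integrable g Q)
    (hg2 : Integrable (fun x => g x ^ 2) Q) : (∫ x, g x ∂Q) ^ 2 ≤ ∫ x, g x ^ 2 ∂Q := by
  set c := ∫ x, g x ∂Q with hc
  have h : 0 ≤ ∫ x, (g x ^ 2 - 2 * c * g x + c ^ 2) ∂Q :=
    integral_nonneg fun x => by
      simp only [Pi.zero_apply]
      nlinarith [sq_nonneg (g x - c)]
  have hi : Integrable (fun x => g x ^ 2 - 2 * c * g x) Q := hg2.sub (hg.const_mul _)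
  rw [integral_add hi (integrable_const _), integral_sub hg2 (hg.const_mul _),
    integral_const_mul, ← hc] at h
  simp only [integral_const, probReal_univ, smul_eq_mul, one_mul] at h
  linarith

/-- Decentering estimate: `a` plays the role of `‖x - c‖²`, `r` of `‖x - m‖²` and `b` of
`‖m - c‖²`, where `m` is the mean. -/
lemma exp_mul_sq_integral_le {α : Type*} [MeasurableSpace α] {Q : Measure α}
    [IsProbabilityMeasure Q] {a r : α → ℝ} {s b : ℝ} (hs : 0 < s) (ham : Measurable a)
    (hrm : Measurable r) (ha : ∀ x, 0 ≤ a x) (hr : ∀ x, 0 ≤ r x) (hb : 0 ≤ b)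
    (hrab : ∀ x, r x ≤ 2 * a x + 2 * b) (hba : b ≤ ∫ x, a x ∂Q)
    (hra : ∫ x, r x ∂Q ≤ ∫ x, a x ∂Q) (hexp : Integrable (fun x => exp (40 * s * a x)) Q) :
    exp (s * (∫ x, r x ∂Q) / 2) * (∫ x, r x * exp (s * r x / 2) ∂Q) ^ 2 ≤
      ∫ x, a x ^ 2 * exp (34 * s * a x) ∂Q := by
  have int : ∀ (k : ℕ) (c : ℝ), c + k * s ≤ 40 * s →
      Integrable (fun x => a x ^ k * exp (c * a x)) Q := fun k c hc => by
    refine (hexp.const_mul ((s ^ k)⁻¹)).mono' (by fun_prop)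
      (Filter.Eventually.of_forall fun x => ?_)
    have hsa := mul_nonneg hs.le (ha x)
    rw [Real.norm_of_nonneg (mul_nonneg (pow_nonneg (ha x) _) (exp_pos _).le)]
    have h1 : (s * a x) ^ k ≤ exp (k * (s * a x)) := by
      rw [exp_nat_mul]
      exact pow_le_pow_left₀ hsa (by linarith [add_one_le_exp (s * a x)]) k
    calc a x ^ k * exp (c * a x) = (s ^ k)⁻¹ * ((s * a x) ^ k * exp (c * a x)) := by
          rw [mul_pow]; field_simp
      _ ≤ (s ^ k)⁻¹ * (exp (k * (s * a x)) * exp (c * a x)) := by gcongr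
      _ ≤ (s ^ k)⁻¹ * exp (40 * s * a x) := by
          rw [← exp_add]
          gcongr
          nlinarith [mul_le_mul_of_nonneg_right hc (ha x)]
  have inta : Integrable a Q := by simpa using int 1 0 (by norm_num; linarith)
  have intr : Integrable r Q := by
    refine ((inta.const_mul 2).add (integrable_const (2 * b))).mono' (by fun_prop)
      (Filter.Eventually.of_forall fun x => ?_)
    rw [Real.norm_of_nonneg (hr x)]
    exact hrab x
  have intae : ∀ c, c ≤ 39 * s → Integrable (fun x => a x * exp (c * a x)) Q := fun c hc => by
    simpa using int 1 c (by push_cast; linarith)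
  have intm : ∀ c, c ≤ 39 * s → Integrable (fun x => a x * (exp (c * a x) - 1)) Q :=
    fun c hc => ((intae c hc).sub inta).congr (Filter.Eventually.of_forall fun x => by
      simp only [Pi.sub_apply]
      ring)
  set ρ := ∫ x, a x ∂Q with hρ
  have hρ0 : 0 ≤ ρ := integral_nonneg ha
  have hB : b * (exp (2 * s * b) - 1) ≤ ∫ x, a x * (exp (2 * s * a x) - 1) ∂Q := by
    set k := exp (2 * s * b) - 1 + b * (2 * s) * exp (2 * s * b) with hk
    have hk0 : 0 ≤ k := by
      have : 0 ≤ 2 * s * b := by positivity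
      have h1 := add_one_le_exp (2 * s * b)
      have : 0 ≤ b * (2 * s) * exp (2 * s * b) := by positivity
      linarith
    have h : ∫ x, (b * (exp (2 * s * b) - 1) - k * b + k * a x) ∂Q ≤
        ∫ x, a x * (exp (2 * s * a x) - 1) ∂Q :=
      integral_mono ((integrable_const _).add (inta.const_mul k))
        (intm (2 * s) (by linarith)) fun x => by
          have := tangent_le_mul_exp_sub_one (s := 2 * s) (b := b) (by linarith) (ha x)
          rw [← hk] at this
          simp only
          linarith
    rw [integral_add (integrable_const _) (inta.const_mul k), integral_const_mul] at h
    simp only [integral_const, probReal_univ, smul_eq_mul, one_mul, ← hρ] at h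
    nlinarith
  have hR : ∫ x, r x * exp (s * r x / 2) ∂Q ≤ ∫ x, a x * exp (16 * s * a x) ∂Q := by
    calc ∫ x, r x * exp (s * r x / 2) ∂Q
        ≤ ∫ x, (r x + (4 * (a x * (exp (2 * s * a x) - 1)) +
            4 * b * (exp (2 * s * b) - 1))) ∂Q := by
          refine integral_mono_of_nonneg (Filter.Eventually.of_forall fun x =>
            mul_nonneg (hr x) (exp_pos _).le)
            (intr.add (((intm (2 * s) (by linarith)).const_mul 4).add (integrable_const _)))
            (Filter.Eventually.of_forall fun x => ?_)
          have := mul_exp_sub_one_le hs.le (hr x) (ha x) hb (hrab x)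
          simp only
          linarith
      _ ≤ ρ + 8 * ∫ x, a x * (exp (2 * s * a x) - 1) ∂Q := by
          have hi : Integrable (fun x => 4 * (a x * (exp (2 * s * a x) - 1)) +
              4 * b * (exp (2 * s * b) - 1)) Q :=
            ((intm (2 * s) (by linarith)).const_mul 4).add (integrable_const _)
          rw [integral_add intr hi, integral_add ((intm (2 * s) (by linarith)).const_mul 4)
            (integrable_const _), integral_const_mul]
          simp only [integral_const, probReal_univ, smul_eq_mul, one_mul]
          linarith
      _ ≤ ρ + ∫ x, a x * (exp (16 * s * a x) - 1) ∂Q := by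
          rw [← integral_const_mul]
          exact add_le_add le_rfl (integral_mono ((intm (2 * s) (by linarith)).const_mul 8)
            (intm (16 * s) (by linarith)) fun x => eight_mul_exp_sub_one_le hs.le (ha x))
      _ = ∫ x, a x * exp (16 * s * a x) ∂Q := by
          rw [hρ, ← integral_add inta (intm (16 * s) (by linarith))]
          congr 1; funext x; ring
  have hC : exp (s * ρ) * ∫ x, a x * exp (16 * s * a x) ∂Q ≤
      ∫ x, a x * exp (17 * s * a x) ∂Q := by
    set k := ρ * exp (16 * s * ρ) * (exp (s * ρ) * s) with hk
    have hi : Integrable (fun x => k * a x - k * ρ) Q :=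
      (inta.const_mul k).sub (integrable_const _)
    have h : ∫ x, (exp (s * ρ) * (a x * exp (16 * s * a x)) + (k * a x - k * ρ)) ∂Q ≤
        ∫ x, a x * exp (17 * s * a x) ∂Q :=
      integral_mono (((intae (16 * s) (by linarith)).const_mul _).add hi)
        (intae (17 * s) (by linarith)) fun x => by
          have := exp_mul_monotone_tangent hs.le (ha x) hρ0
          rw [← hk] at this
          simp only
          linarith
    rw [integral_add ((intae (16 * s) (by linarith)).const_mul _) hi,
      integral_sub (inta.const_mul k) (integrable_const _), integral_const_mul,
      integral_const_mul, ← hρ] at h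
    simpa using h
  have hτ : exp (s * (∫ x, r x ∂Q) / 4) ≤ exp (s * ρ) := exp_le_exp.2 (by nlinarith)
  have hF : exp (s * (∫ x, r x ∂Q) / 4) * ∫ x, r x * exp (s * r x / 2) ∂Q ≤
      ∫ x, a x * exp (17 * s * a x) ∂Q :=
    (mul_le_mul hτ hR (integral_nonneg fun x => mul_nonneg (hr x) (exp_pos _).le)
      (exp_pos _).le).trans hC
  have e34 : ∀ x, (a x * exp (17 * s * a x)) ^ 2 = a x ^ 2 * exp (34 * s * a x) := fun x => by
    rw [mul_pow, ← exp_nat_mul]; push_cast; ring_nf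
  calc exp (s * (∫ x, r x ∂Q) / 2) * (∫ x, r x * exp (s * r x / 2) ∂Q) ^ 2
      = (exp (s * (∫ x, r x ∂Q) / 4) * ∫ x, r x * exp (s * r x / 2) ∂Q) ^ 2 := by
        rw [mul_pow, ← exp_nat_mul]; push_cast; ring_nf
    _ ≤ (∫ x, a x * exp (17 * s * a x) ∂Q) ^ 2 :=
        pow_le_pow_left₀ (mul_nonneg (exp_pos _).le
          (integral_nonneg fun x => mul_nonneg (hr x) (exp_pos _).le)) hF 2
    _ ≤ ∫ x, a x ^ 2 * exp (34 * s * a x) ∂Q := by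
        simp only [← e34]
        refine sq_integral_le_integral_sq (intae _ (by linarith)) ?_
        simp only [e34]
        exact int 2 _ (by push_cast; linarith)


/-- The likelihood of the observation `y` of `t • x + z`, `x ∼ Q`, relative to the Gaussian. -/
def evidence {n : ℕ} (Q : Measure (Fin n → ℝ)) (t : ℝ) (y : Fin n → ℝ) : ℝ :=
  ∫ x, shiftDensity (t • x) y ∂Q

/-- The unnormalised posterior mean of the `i`-th coordinate. -/
def postMoment {n : ℕ} (Q : Measure (Fin n → ℝ)) (t : ℝ) (y : Fin n → ℝ) (i : Fin n) : ℝ :=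
  ∫ x, x i * shiftDensity (t • x) y ∂Q

/-- The squared norm of the posterior mean, weighted by the likelihood. -/
def postEnergy {n : ℕ} (Q : Measure (Fin n → ℝ)) (t : ℝ) (y : Fin n → ℝ) : ℝ :=
  (∑ i, postMoment Q t y i ^ 2) / evidence Q t y

lemma shiftDensity_le {n : ℕ} (x y : Fin n → ℝ) : shiftDensity x y ≤ exp (y ⬝ᵥ y / 2) := by
  refine exp_le_exp.2 ?_
  have h : 0 ≤ (x - y) ⬝ᵥ (x - y) := Finset.sum_nonneg fun i _ => mul_self_nonneg _
  simp only [sub_dotProduct, dotProduct_sub, dotProduct_comm y x] at h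
  linarith

lemma integrable_mul_shiftDensity {n : ℕ} {Q : Measure (Fin n → ℝ)} {g : (Fin n → ℝ) → ℝ}
    (hg : Integrable g Q) (t : ℝ) (y : Fin n → ℝ) :
    Integrable (fun x => g x * shiftDensity (t • x) y) Q := by
  refine hg.mul_bdd (c := exp (y ⬝ᵥ y / 2))
    (by fun_prop : Measurable fun x => shiftDensity (t • x) y).aestronglyMeasurable
    (Filter.Eventually.of_forall fun x => ?_)
  rw [Real.norm_of_nonneg (shiftDensity_pos _ _).le]
  exact shiftDensity_le _ _

lemma integrable_shiftDensity_smul {n : ℕ} (Q : Measure (Fin n → ℝ)) [IsFiniteMeasure Q] (t : ℝ)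
    (y : Fin n → ℝ) : Integrable (fun x => shiftDensity (t • x) y) Q := by
  simpa using integrable_mul_shiftDensity (integrable_const (1 : ℝ)) t y

lemma evidence_pos {n : ℕ} (Q : Measure (Fin n → ℝ)) [IsProbabilityMeasure Q] (t : ℝ)
    (y : Fin n → ℝ) : 0 < evidence Q t y := by
  rw [evidence, integral_pos_iff_support_of_nonneg (fun x => (shiftDensity_pos _ _).le)
    (integrable_shiftDensity_smul Q t y)]
  have : Function.support (fun x => shiftDensity (t • x) y) = Set.univ :=
    Set.eq_univ_of_forall fun x => (shiftDensity_pos _ _).ne'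
  simp [this]

lemma measurable_evidence {n : ℕ} (Q : Measure (Fin n → ℝ)) [SFinite Q] (t : ℝ) :
    Measurable (evidence Q t) := by
  have : Measurable fun p : (Fin n → ℝ) × (Fin n → ℝ) => shiftDensity (t • p.2) p.1 := by
    fun_prop
  exact (this.stronglyMeasurable.integral_prod_right' (ν := Q)).measurable

lemma measurable_postMoment {n : ℕ} (Q : Measure (Fin n → ℝ)) [SFinite Q] (t : ℝ) (i : Fin n) :
    Measurable fun y => postMoment Q t y i := by
  have : Measurable fun p : (Fin n → ℝ) × (Fin n → ℝ) => p.2 i * shiftDensity (t • p.2) p.1 := by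
    fun_prop
  exact (this.stronglyMeasurable.integral_prod_right' (ν := Q)).measurable

lemma measurable_postEnergy {n : ℕ} (Q : Measure (Fin n → ℝ)) [SFinite Q] (t : ℝ) :
    Measurable (postEnergy Q t) :=
  (Finset.measurable_sum _ fun i _ => (measurable_postMoment Q t i).pow_const 2).div
    (measurable_evidence Q t)

lemma postEnergy_nonneg {n : ℕ} (Q : Measure (Fin n → ℝ)) (t : ℝ) (y : Fin n → ℝ) :
    0 ≤ postEnergy Q t y :=
  div_nonneg (Finset.sum_nonneg fun _ _ => sq_nonneg _)
    (integral_nonneg fun _ => (shiftDensity_pos _ _).le)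

lemma integrable_prod_mul_shiftDensity {n : ℕ} {Q : Measure (Fin n → ℝ)} [SFinite Q]
    {g : (Fin n → ℝ) → ℝ} (hg : Integrable g Q) (t : ℝ) :
    Integrable (fun p : (Fin n → ℝ) × (Fin n → ℝ) => g p.2 * shiftDensity (t • p.2) p.1)
      ((stdGauss n).prod Q) := by
  have hm : AEStronglyMeasurable
      (fun p : (Fin n → ℝ) × (Fin n → ℝ) => g p.2 * shiftDensity (t • p.2) p.1)
      ((stdGauss n).prod Q) :=
    hg.1.comp_snd.mul (by fun_prop : Measurable fun p : (Fin n → ℝ) × (Fin n → ℝ) =>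
      shiftDensity (t • p.2) p.1).aestronglyMeasurable
  refine (integrable_prod_iff' hm).2 ⟨Filter.Eventually.of_forall fun x =>
    (integrable_shiftDensity (t • x)).const_mul (g x), ?_⟩
  simp only [norm_mul, Real.norm_of_nonneg (shiftDensity_pos _ _).le, integral_const_mul,
    integral_shiftDensity, mul_one]
  exact hg.norm

lemma integrable_integral_mul_shiftDensity {n : ℕ} {Q : Measure (Fin n → ℝ)} [SFinite Q]
    {g : (Fin n → ℝ) → ℝ} (hg : Integrable g Q) (t : ℝ) :
    Integrable (fun y => ∫ x, g x * shiftDensity (t • x) y ∂Q) (stdGauss n) :=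
  (integrable_prod_mul_shiftDensity hg t).integral_prod_left

lemma integral_integral_mul_shiftDensity {n : ℕ} {Q : Measure (Fin n → ℝ)} [SFinite Q]
    {g : (Fin n → ℝ) → ℝ} (hg : Integrable g Q) (t : ℝ) :
    ∫ y, ∫ x, g x * shiftDensity (t • x) y ∂Q ∂stdGauss n = ∫ x, g x ∂Q := by
  rw [integral_integral_swap (integrable_prod_mul_shiftDensity hg t)]
  simp only [integral_const_mul, integral_shiftDensity, mul_one]

lemma integrable_evidence {n : ℕ} (Q : Measure (Fin n → ℝ)) [IsFiniteMeasure Q] (t : ℝ) :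
    Integrable (fun y => evidence Q t y) (stdGauss n) := by
  simpa [evidence] using integrable_integral_mul_shiftDensity (integrable_const (μ := Q) (1 : ℝ)) t

lemma integral_evidence {n : ℕ} (Q : Measure (Fin n → ℝ)) [IsProbabilityMeasure Q] (t : ℝ) :
    ∫ y, evidence Q t y ∂stdGauss n = 1 := by
  simpa [evidence] using integral_integral_mul_shiftDensity (integrable_const (μ := Q) (1 : ℝ)) t

lemma mul_exp_le_add_sq {s θ : ℝ} (hs : 0 ≤ s) :
    θ * exp (s * θ) ≤ θ + s * (θ ^ 2 * exp (s * |θ|)) := by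
  rcases le_total 0 θ with h | h
  · rw [abs_of_nonneg h]
    have h1 : exp (s * θ) * (1 - s * θ) ≤ 1 := by
      have := mul_le_mul_of_nonneg_left (add_one_le_exp (-(s * θ))) (exp_pos (s * θ)).le
      rw [← exp_add, add_neg_cancel, exp_zero] at this
      linarith
    nlinarith [mul_le_mul_of_nonneg_left h1 h]
  · have h1 : 1 + s * θ ≤ exp (s * θ) := by linarith [add_one_le_exp (s * θ)]
    have h2 : 1 ≤ exp (s * |θ|) := one_le_exp (by positivity)
    nlinarith [mul_le_mul_of_nonpos_left h1 h, mul_le_mul_of_nonneg_left h2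
      (show 0 ≤ s * θ ^ 2 by positivity)]

lemma dotProduct_sq_le {n : ℕ} (u v : Fin n → ℝ) : (u ⬝ᵥ v) ^ 2 ≤ (u ⬝ᵥ u) * (v ⬝ᵥ v) := by
  simpa only [dotProduct, pow_two] using Finset.sum_mul_sq_le_sq_mul_sq Finset.univ u v

lemma dotProduct_self_nonneg' {n : ℕ} (u : Fin n → ℝ) : 0 ≤ u ⬝ᵥ u :=
  Finset.sum_nonneg fun _ _ => mul_self_nonneg _

lemma abs_dotProduct_le {n : ℕ} (u v : Fin n → ℝ) : |u ⬝ᵥ v| ≤ (u ⬝ᵥ u + v ⬝ᵥ v) / 2 := by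
  refine abs_le_of_sq_le_sq ?_ (by linarith [dotProduct_self_nonneg' u, dotProduct_self_nonneg' v])
  nlinarith [dotProduct_sq_le u v, sq_nonneg (u ⬝ᵥ u - v ⬝ᵥ v)]

lemma shiftDensity_mul_mul_exp {n : ℕ} (t τ : ℝ) (m x₁ x₂ v : Fin n → ℝ) :
    shiftDensity (t • x₁) v * shiftDensity (t • x₂) v *
        exp (-(t * (m ⬝ᵥ v)) + t ^ 2 * (τ + m ⬝ᵥ m) / 2) =
      exp (t ^ 2 * ((x₁ - m) ⬝ᵥ (x₂ - m)) + t ^ 2 * τ / 2) *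
        shiftDensity (t • (x₁ + x₂ - m)) v := by
  simp only [shiftDensity, ← exp_add]
  congr 1
  simp only [smul_dotProduct, dotProduct_smul, sub_dotProduct, dotProduct_sub, add_dotProduct,
    dotProduct_add, smul_eq_mul, dotProduct_comm m x₁, dotProduct_comm m x₂,
    dotProduct_comm x₂ x₁]
  ring

/-- Exact second-order computation for the centered part of the posterior energy. -/
lemma integral_sum_sq_mul_exp_le {n : ℕ} {Q : Measure (Fin n → ℝ)} [IsProbabilityMeasure Q]
    {t τ : ℝ} {m : Fin n → ℝ} (hm : ∀ i, ∫ x, (x i - m i) ∂Q = 0)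
    (hi : ∀ i, Integrable (fun x => x i - m i) Q)
    (he : Integrable (fun x => exp (t ^ 2 * ((x - m) ⬝ᵥ (x - m)) / 2)) Q)
    (hre : Integrable (fun x => (x - m) ⬝ᵥ (x - m) * exp (t ^ 2 * ((x - m) ⬝ᵥ (x - m)) / 2)) Q) :
    Integrable (fun v => (∑ i, (∫ x, (x i - m i) * shiftDensity (t • x) v ∂Q) ^ 2) *
        exp (-(t * (m ⬝ᵥ v)) + t ^ 2 * (τ + m ⬝ᵥ m) / 2)) (stdGauss n) ∧
      ∫ v, (∑ i, (∫ x, (x i - m i) * shiftDensity (t • x) v ∂Q) ^ 2) *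
        exp (-(t * (m ⬝ᵥ v)) + t ^ 2 * (τ + m ⬝ᵥ m) / 2) ∂stdGauss n ≤
      t ^ 2 * (exp (t ^ 2 * τ / 2) *
        (∫ x, (x - m) ⬝ᵥ (x - m) * exp (t ^ 2 * ((x - m) ⬝ᵥ (x - m)) / 2) ∂Q) ^ 2) := by
  set w : (Fin n → ℝ) → ℝ := fun v => exp (-(t * (m ⬝ᵥ v)) + t ^ 2 * (τ + m ⬝ᵥ m) / 2) with hw
  set r : (Fin n → ℝ) → ℝ := fun x => (x - m) ⬝ᵥ (x - m) with hr
  have hr0 : ∀ x, 0 ≤ r x := fun x => dotProduct_self_nonneg' _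
  set F : (Fin n → ℝ) × ((Fin n → ℝ) × (Fin n → ℝ)) → ℝ := fun p =>
    ((p.2.1 - m) ⬝ᵥ (p.2.2 - m)) *
      (shiftDensity (t • p.2.1) p.1 * shiftDensity (t • p.2.2) p.1 * w p.1) with hF
  have hFm : Measurable F := by fun_prop
  have hF' : ∀ v q, F (v, q) = ((q.1 - m) ⬝ᵥ (q.2 - m)) *
      exp (t ^ 2 * ((q.1 - m) ⬝ᵥ (q.2 - m)) + t ^ 2 * τ / 2) *
        shiftDensity (t • (q.1 + q.2 - m)) v := fun v q => by
    simp only [hF, hw, shiftDensity_mul_mul_exp]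
    ring
  have hθ : ∀ x y : Fin n → ℝ, exp (t ^ 2 * |(x - m) ⬝ᵥ (y - m)|) ≤
      exp (t ^ 2 * r x / 2) * exp (t ^ 2 * r y / 2) := fun x y => by
    rw [← exp_add]
    refine exp_le_exp.2 ?_
    nlinarith [mul_le_mul_of_nonneg_left (abs_dotProduct_le (x - m) (y - m)) (sq_nonneg t)]
  have hG : Integrable (fun q : (Fin n → ℝ) × (Fin n → ℝ) => ((q.1 - m) ⬝ᵥ (q.2 - m)) *
      exp (t ^ 2 * ((q.1 - m) ⬝ᵥ (q.2 - m)) + t ^ 2 * τ / 2)) (Q.prod Q) := by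
    refine (((hre.add he).mul_prod (hre.add he)).const_mul (exp (t ^ 2 * τ / 2))).mono'
      (by fun_prop) (Filter.Eventually.of_forall fun q => ?_)
    rw [norm_mul, Real.norm_eq_abs, Real.norm_of_nonneg (exp_pos _).le, exp_add]
    simp only [Pi.add_apply]
    have h1 := abs_dotProduct_le (q.1 - m) (q.2 - m)
    have h2 : exp (t ^ 2 * ((q.1 - m) ⬝ᵥ (q.2 - m))) ≤
        exp (t ^ 2 * r q.1 / 2) * exp (t ^ 2 * r q.2 / 2) :=
      (exp_le_exp.2 (mul_le_mul_of_nonneg_left (le_abs_self _) (sq_nonneg t))).trans (hθ _ _)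
    have h3 : |(q.1 - m) ⬝ᵥ (q.2 - m)| ≤ (r q.1 + 1) * (r q.2 + 1) := by
      nlinarith [hr0 q.1, hr0 q.2, mul_nonneg (hr0 q.1) (hr0 q.2)]
    calc |(q.1 - m) ⬝ᵥ (q.2 - m)| * (exp (t ^ 2 * ((q.1 - m) ⬝ᵥ (q.2 - m))) *
          exp (t ^ 2 * τ / 2))
        ≤ ((r q.1 + 1) * (r q.2 + 1)) * ((exp (t ^ 2 * r q.1 / 2) * exp (t ^ 2 * r q.2 / 2)) *
          exp (t ^ 2 * τ / 2)) :=
          mul_le_mul h3 (mul_le_mul_of_nonneg_right h2 (exp_pos _).le) (by positivity)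
            ((abs_nonneg _).trans h3)
      _ = _ := by ring
  have hFi : Integrable F ((stdGauss n).prod (Q.prod Q)) := by
    refine (integrable_prod_iff' hFm.aestronglyMeasurable).2
      ⟨Filter.Eventually.of_forall fun q => ?_, ?_⟩
    · simp only [hF']
      exact (integrable_shiftDensity _).const_mul _
    · simp only [hF', norm_mul _ (shiftDensity _ _), Real.norm_of_nonneg (shiftDensity_pos _ _).le,
        integral_const_mul, integral_shiftDensity, mul_one]
      exact hG.norm
  have hFv : ∀ v, ∫ q, F (v, q) ∂Q.prod Q =
      (∑ i, (∫ x, (x i - m i) * shiftDensity (t • x) v ∂Q) ^ 2) * w v := fun v => by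
    have e : ∀ q : (Fin n → ℝ) × (Fin n → ℝ), F (v, q) =
        (∑ i, ((q.1 i - m i) * shiftDensity (t • q.1) v) *
          ((q.2 i - m i) * shiftDensity (t • q.2) v)) * w v := fun q => by
      simp only [hF, dotProduct, Pi.sub_apply, Finset.sum_mul]
      exact Finset.sum_congr rfl fun i _ => by ring
    simp only [e]
    rw [integral_mul_const, integral_finsetSum _ fun i _ =>
      (integrable_mul_shiftDensity (hi i) t v).mul_prod (integrable_mul_shiftDensity (hi i) t v)]
    congr 1
    refine Finset.sum_congr rfl fun i _ => ?_
    rw [pow_two, integral_prod_mul (fun x : Fin n → ℝ => (x i - m i) * shiftDensity (t • x) v)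
      (fun x : Fin n → ℝ => (x i - m i) * shiftDensity (t • x) v)]
  refine ⟨by simpa only [hFv] using hFi.integral_prod_left, ?_⟩
  refine (integral_congr_ae (Filter.Eventually.of_forall fun v => (hFv v).symm)).trans_le ?_
  rw [integral_integral_swap (f := fun v q => F (v, q)) hFi]
  simp only [hF', integral_const_mul, integral_shiftDensity, mul_one]
  have h0i : Integrable (fun q : (Fin n → ℝ) × (Fin n → ℝ) => (q.1 - m) ⬝ᵥ (q.2 - m))
      (Q.prod Q) :=
    integrable_finsetSum _ fun i _ => (hi i).mul_prod (hi i)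
  have h0 : ∫ q : (Fin n → ℝ) × (Fin n → ℝ), (q.1 - m) ⬝ᵥ (q.2 - m) ∂Q.prod Q = 0 := by
    simp only [dotProduct, Pi.sub_apply]
    rw [integral_finsetSum _ fun i _ => (hi i).mul_prod (hi i)]
    refine Finset.sum_eq_zero fun i _ => ?_
    rw [integral_prod_mul (fun x : Fin n → ℝ => x i - m i) (fun x : Fin n → ℝ => x i - m i),
      hm, zero_mul]
  have hrr := (hre.mul_prod hre).const_mul (t ^ 2)
  calc ∫ q : (Fin n → ℝ) × (Fin n → ℝ), ((q.1 - m) ⬝ᵥ (q.2 - m)) *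
        exp (t ^ 2 * ((q.1 - m) ⬝ᵥ (q.2 - m)) + t ^ 2 * τ / 2) ∂Q.prod Q
      ≤ ∫ q : (Fin n → ℝ) × (Fin n → ℝ), exp (t ^ 2 * τ / 2) * ((q.1 - m) ⬝ᵥ (q.2 - m) +
          t ^ 2 * ((r q.1 * exp (t ^ 2 * r q.1 / 2)) * (r q.2 * exp (t ^ 2 * r q.2 / 2))))
          ∂Q.prod Q := by
        refine integral_mono hG ((h0i.add hrr).const_mul _) fun q => ?_
        have h1 := mul_exp_le_add_sq (s := t ^ 2) (θ := (q.1 - m) ⬝ᵥ (q.2 - m)) (sq_nonneg t)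
        have h2 : ((q.1 - m) ⬝ᵥ (q.2 - m)) ^ 2 * exp (t ^ 2 * |(q.1 - m) ⬝ᵥ (q.2 - m)|) ≤
            (r q.1 * r q.2) * (exp (t ^ 2 * r q.1 / 2) * exp (t ^ 2 * r q.2 / 2)) :=
          mul_le_mul (dotProduct_sq_le _ _) (hθ _ _) (exp_pos _).le
            (mul_nonneg (hr0 _) (hr0 _))
        have h3 := mul_le_mul_of_nonneg_left h2 (sq_nonneg t)
        simp only [exp_add]
        rw [← mul_assoc, mul_comm]
        refine mul_le_mul_of_nonneg_left ?_ (exp_pos _).le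
        linarith
    _ = _ := by
        rw [integral_const_mul, integral_add h0i hrr, h0, integral_const_mul, integral_prod_mul
          (fun x => r x * exp (t ^ 2 * r x / 2)) (fun x => r x * exp (t ^ 2 * r x / 2))]
        ring

lemma exp_integral_le_evidence {n : ℕ} {Q : Measure (Fin n → ℝ)} [IsProbabilityMeasure Q] (t : ℝ)
    (v : Fin n → ℝ) (hi : ∀ i, Integrable (fun x => x i) Q)
    (hxx : Integrable (fun x => x ⬝ᵥ x) Q) :
    exp (t * ((fun i => ∫ x, x i ∂Q) ⬝ᵥ v) - t ^ 2 * (∫ x, x ⬝ᵥ x ∂Q) / 2) ≤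
      evidence Q t v := by
  set k := t * ((fun i => ∫ x, x i ∂Q) ⬝ᵥ v) - t ^ 2 * (∫ x, x ⬝ᵥ x ∂Q) / 2 with hk
  have hd : Integrable (fun x => x ⬝ᵥ v) Q :=
    integrable_finsetSum _ fun i _ => (hi i).mul_const (v i)
  have hdi : ∫ x, x ⬝ᵥ v ∂Q = (fun i => ∫ x, x i ∂Q) ⬝ᵥ v := by
    simp only [dotProduct]
    rw [integral_finsetSum _ fun i _ => (hi i).mul_const (v i)]
    simp only [integral_mul_const]
  have hf : Integrable (fun x => t * (x ⬝ᵥ v) - t ^ 2 / 2 * (x ⬝ᵥ x)) Q :=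
    (hd.const_mul t).sub (hxx.const_mul _)
  have hfi : ∫ x, (t * (x ⬝ᵥ v) - t ^ 2 / 2 * (x ⬝ᵥ x)) ∂Q = k := by
    rw [integral_sub (hd.const_mul t) (hxx.const_mul _), integral_const_mul, integral_const_mul,
      hdi, hk]
    ring
  have h : ∫ x, (exp k * (t * (x ⬝ᵥ v) - t ^ 2 / 2 * (x ⬝ᵥ x)) + exp k * (1 - k)) ∂Q ≤
      evidence Q t v := by
    refine integral_mono ((hf.const_mul _).add (integrable_const _))
      (integrable_shiftDensity_smul Q t v) fun x => ?_
    have e : shiftDensity (t • x) v =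
        exp k * exp (t * (x ⬝ᵥ v) - t ^ 2 / 2 * (x ⬝ᵥ x) - k) := by
      rw [shiftDensity, ← exp_add]
      simp only [smul_dotProduct, dotProduct_smul, smul_eq_mul]
      ring_nf
    simp only [e]
    have := mul_le_mul_of_nonneg_left
      (add_one_le_exp (t * (x ⬝ᵥ v) - t ^ 2 / 2 * (x ⬝ᵥ x) - k)) (exp_pos k).le
    linarith
  rw [integral_add (hf.const_mul _) (integrable_const _), integral_const_mul, hfi] at h
  simp only [integral_const, probReal_univ, smul_eq_mul, one_mul] at h
  linarith

lemma postEnergy_le {n : ℕ} {Q : Measure (Fin n → ℝ)} [IsProbabilityMeasure Q] {t w : ℝ}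
    {v m : Fin n → ℝ} (hi : ∀ i, Integrable (fun x => x i) Q) (hw : 1 ≤ evidence Q t v * w) :
    postEnergy Q t v ≤ (∑ i, (∫ x, (x i - m i) * shiftDensity (t • x) v ∂Q) ^ 2) * w +
      (2 * (∑ i, m i * ∫ x, (x i - m i) * shiftDensity (t • x) v ∂Q) +
        m ⬝ᵥ m * evidence Q t v) := by
  have hp := evidence_pos Q t v
  have hN : ∀ i, postMoment Q t v i =
      (∫ x, (x i - m i) * shiftDensity (t • x) v ∂Q) + m i * evidence Q t v := fun i => by
    have hs : Integrable (fun x => x i - m i) Q := (hi i).sub (integrable_const _)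
    rw [postMoment, evidence, ← integral_const_mul, ← integral_add
      (integrable_mul_shiftDensity hs t v)
      ((integrable_shiftDensity_smul Q t v).const_mul _)]
    congr 1
    funext x
    ring
  rw [postEnergy, div_le_iff₀ hp]
  simp only [hN]
  set A : Fin n → ℝ := fun i => ∫ x, (x i - m i) * shiftDensity (t • x) v ∂Q
  set p := evidence Q t v
  have e : ∑ i, (A i + m i * p) ^ 2 =
      (∑ i, A i ^ 2) + (2 * (∑ i, m i * A i) + m ⬝ᵥ m * p) * p := by
    simp only [dotProduct, Finset.mul_sum, Finset.sum_mul, ← Finset.sum_add_distrib]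
    exact Finset.sum_congr rfl fun i _ => by ring
  have h0 : 0 ≤ ∑ i, A i ^ 2 := Finset.sum_nonneg fun i _ => sq_nonneg _
  change ∑ i, (A i + m i * p) ^ 2 ≤ _
  rw [e, add_mul]
  nlinarith [mul_le_mul_of_nonneg_left hw h0]

lemma integrable_exp_mul_of_le {α : Type*} [MeasurableSpace α] {Q : Measure α} {a : α → ℝ}
    (ham : Measurable a) (ha : ∀ x, 0 ≤ a x) {k K : ℝ} (hk : k ≤ K)
    (h : Integrable (fun x => exp (K * a x)) Q) : Integrable (fun x => exp (k * a x)) Q := by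
  refine h.mono' (by fun_prop) (Filter.Eventually.of_forall fun x => ?_)
  rw [Real.norm_of_nonneg (exp_pos _).le]
  exact exp_le_exp.2 (mul_le_mul_of_nonneg_right hk (ha x))

/-- A weak additional observation of `x ∼ Q` gains little posterior energy. -/
lemma integral_postEnergy_le {n : ℕ} {Q : Measure (Fin n → ℝ)} [IsProbabilityMeasure Q] {t : ℝ}
    (ht : 0 < t) (c : Fin n → ℝ)
    (hexp : Integrable (fun x => exp (40 * t ^ 2 * ((x - c) ⬝ᵥ (x - c)))) Q) :
    ∫ v, postEnergy Q t v ∂stdGauss n ≤ ∑ i, (∫ x, x i ∂Q) ^ 2 +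
      t ^ 2 * ∫ x, ((x - c) ⬝ᵥ (x - c)) ^ 2 * exp (34 * t ^ 2 * ((x - c) ⬝ᵥ (x - c))) ∂Q := by
  have hs : 0 < t ^ 2 := by positivity
  have ha0 : ∀ x, 0 ≤ (x - c) ⬝ᵥ (x - c) := fun x => dotProduct_self_nonneg' _
  have hE : ∀ k ≤ 40 * t ^ 2, Integrable (fun x => exp (k * ((x - c) ⬝ᵥ (x - c)))) Q :=
    fun k hk => integrable_exp_mul_of_le (by fun_prop) ha0 hk hexp
  have inta : Integrable (fun x => (x - c) ⬝ᵥ (x - c)) Q := by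
    refine ((hE (t ^ 2) (by linarith)).const_mul (t ^ 2)⁻¹).mono' (by fun_prop)
      (Filter.Eventually.of_forall fun x => ?_)
    rw [Real.norm_of_nonneg (ha0 x), inv_mul_eq_div, le_div_iff₀ hs]
    linarith [add_one_le_exp (t ^ 2 * ((x - c) ⬝ᵥ (x - c)))]
  have hic : ∀ i, Integrable (fun x => x i - c i) Q := fun i => by
    refine (inta.add (integrable_const (1 : ℝ))).mono'
      (by fun_prop : Measurable fun x : Fin n → ℝ => x i - c i).aestronglyMeasurable
      (Filter.Eventually.of_forall fun x => ?_)
    have h1 : (x i - c i) * (x i - c i) ≤ (x - c) ⬝ᵥ (x - c) :=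
      Finset.single_le_sum (f := fun j => (x - c) j * (x - c) j)
        (fun j _ => mul_self_nonneg _) (Finset.mem_univ i)
    simp only [Pi.add_apply, Real.norm_eq_abs]
    rw [abs_le]
    constructor <;> nlinarith [sq_nonneg (x i - c i - 1), sq_nonneg (x i - c i + 1)]
  have hi : ∀ i, Integrable (fun x => x i) Q := fun i => by
    refine ((hic i).add (integrable_const (c i))).congr (Filter.Eventually.of_forall fun x => ?_)
    simp
  set m : Fin n → ℝ := fun i => ∫ x, x i ∂Q with hm
  have him : ∀ i, Integrable (fun x => x i - m i) Q := fun i => (hi i).sub (integrable_const _)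
  have hm0 : ∀ i, ∫ x, (x i - m i) ∂Q = 0 := fun i => by
    rw [integral_sub (hi i) (integrable_const _)]
    simp [hm]
  have hr0 : ∀ x, 0 ≤ (x - m) ⬝ᵥ (x - m) := fun x => dotProduct_self_nonneg' _
  have hb0 := dotProduct_self_nonneg' (m - c)
  have hrab : ∀ x, (x - m) ⬝ᵥ (x - m) ≤ 2 * ((x - c) ⬝ᵥ (x - c)) + 2 * ((m - c) ⬝ᵥ (m - c)) :=
    fun x => by
      simp only [dotProduct, Finset.mul_sum, ← Finset.sum_add_distrib, Pi.sub_apply]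
      exact Finset.sum_le_sum fun i _ => by nlinarith [sq_nonneg (x i - c i + (m i - c i))]
  have intr : Integrable (fun x => (x - m) ⬝ᵥ (x - m)) Q := by
    refine ((inta.const_mul 2).add (integrable_const (2 * ((m - c) ⬝ᵥ (m - c))))).mono'
      (by fun_prop) (Filter.Eventually.of_forall fun x => ?_)
    rw [Real.norm_of_nonneg (hr0 x)]
    exact hrab x
  have hEr : Integrable (fun x => exp (t ^ 2 * ((x - m) ⬝ᵥ (x - m)))) Q := by
    refine ((hE (2 * t ^ 2) (by linarith)).mul_const
      (exp (2 * t ^ 2 * ((m - c) ⬝ᵥ (m - c))))).mono'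
      (by fun_prop) (Filter.Eventually.of_forall fun x => ?_)
    rw [Real.norm_of_nonneg (exp_pos _).le, ← exp_add]
    exact exp_le_exp.2 (by nlinarith [mul_le_mul_of_nonneg_left (hrab x) hs.le])
  have he : Integrable (fun x => exp (t ^ 2 * ((x - m) ⬝ᵥ (x - m)) / 2)) Q := by
    simpa only [div_mul_eq_mul_div] using
      integrable_exp_mul_of_le (by fun_prop) hr0 (show t ^ 2 / 2 ≤ t ^ 2 by linarith) hEr
  have hre : Integrable
      (fun x => (x - m) ⬝ᵥ (x - m) * exp (t ^ 2 * ((x - m) ⬝ᵥ (x - m)) / 2)) Q := by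
    refine (hEr.const_mul (2 / t ^ 2)).mono' (by fun_prop)
      (Filter.Eventually.of_forall fun x => ?_)
    rw [Real.norm_of_nonneg (mul_nonneg (hr0 x) (exp_pos _).le)]
    have h1 := add_one_le_exp (t ^ 2 * ((x - m) ⬝ᵥ (x - m)) / 2)
    have h2 : exp (t ^ 2 * ((x - m) ⬝ᵥ (x - m))) = exp (t ^ 2 * ((x - m) ⬝ᵥ (x - m)) / 2) *
        exp (t ^ 2 * ((x - m) ⬝ᵥ (x - m)) / 2) := by rw [← exp_add, add_halves]
    rw [h2, ← mul_assoc]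
    refine mul_le_mul_of_nonneg_right ?_ (exp_pos _).le
    rw [div_mul_eq_mul_div, le_div_iff₀ hs]
    linarith
  -- the parallel axis identity
  have hpar : ∀ d : Fin n → ℝ, ∀ x, (x - d) ⬝ᵥ (x - d) =
      (x - m) ⬝ᵥ (x - m) + ((m - d) ⬝ᵥ (m - d) + ∑ i, 2 * (m i - d i) * (x i - m i)) :=
    fun d x => by
      simp only [dotProduct, ← Finset.sum_add_distrib, Pi.sub_apply]
      exact Finset.sum_congr rfl fun i _ => by ring
  have hlin : ∀ d : Fin n → ℝ, Integrable (fun x => ∑ i, 2 * (m i - d i) * (x i - m i)) Q :=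
    fun d => integrable_finsetSum _ fun i _ => (him i).const_mul _
  have hpari : ∀ d : Fin n → ℝ, Integrable (fun x => (x - d) ⬝ᵥ (x - d)) Q ∧
      ∫ x, (x - d) ⬝ᵥ (x - d) ∂Q =
        (∫ x, (x - m) ⬝ᵥ (x - m) ∂Q) + (m - d) ⬝ᵥ (m - d) := fun d => by
    have hc : Integrable
        (fun x => (m - d) ⬝ᵥ (m - d) + ∑ i, 2 * (m i - d i) * (x i - m i)) Q :=
      (integrable_const _).add (hlin d)
    refine ⟨?_, ?_⟩
    · exact (intr.add hc).congr (Filter.Eventually.of_forall fun x => (hpar d x).symm)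
    · rw [integral_congr_ae (Filter.Eventually.of_forall (hpar d)), integral_add intr hc,
        integral_add (integrable_const _) (hlin d),
        integral_finsetSum _ fun i _ => (him i).const_mul _]
      simp [integral_const_mul, hm0]
  set τ := ∫ x, (x - m) ⬝ᵥ (x - m) ∂Q with hτ
  have hτ0 : 0 ≤ τ := integral_nonneg hr0
  have hxx : Integrable (fun x => x ⬝ᵥ x) Q := by simpa using (hpari 0).1
  have hxxi : ∫ x, x ⬝ᵥ x ∂Q = τ + m ⬝ᵥ m := by simpa using (hpari 0).2
  have hac := (hpari c).2
  obtain ⟨hAi, hA⟩ := integral_sum_sq_mul_exp_le (τ := τ) hm0 him he hre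
  have hw : ∀ v, 1 ≤ evidence Q t v * exp (-(t * (m ⬝ᵥ v)) + t ^ 2 * (τ + m ⬝ᵥ m) / 2) :=
    fun v => by
      have h := exp_integral_le_evidence t v hi hxx
      rw [hxxi] at h
      refine le_trans (le_of_eq ?_) (mul_le_mul_of_nonneg_right h (exp_pos _).le)
      rw [← exp_add, ← hm, ← exp_zero]
      ring_nf
  have hlinA : Integrable (fun v => ∑ i, m i * ∫ x, (x i - m i) * shiftDensity (t • x) v ∂Q)
      (stdGauss n) :=
    integrable_finsetSum _ fun i _ =>
      (integrable_integral_mul_shiftDensity (him i) t).const_mul _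
  have hlinA0 : ∫ v, ∑ i, m i * ∫ x, (x i - m i) * shiftDensity (t • x) v ∂Q ∂stdGauss n = 0 := by
    rw [integral_finsetSum _ fun i _ =>
      (integrable_integral_mul_shiftDensity (him i) t).const_mul _]
    simp [integral_const_mul, integral_integral_mul_shiftDensity (him _), hm0]
  have hrest : Integrable (fun v =>
      2 * (∑ i, m i * ∫ x, (x i - m i) * shiftDensity (t • x) v ∂Q) + m ⬝ᵥ m * evidence Q t v)
      (stdGauss n) :=
    (hlinA.const_mul 2).add ((integrable_evidence Q t).const_mul _)
  have hmain := integral_mono_of_nonneg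
    (Filter.Eventually.of_forall fun v => postEnergy_nonneg Q t v) (hAi.add hrest)
    (Filter.Eventually.of_forall fun v => postEnergy_le (m := m) hi (hw v))
  have hsum : ∫ v, ((∑ i, (∫ x, (x i - m i) * shiftDensity (t • x) v ∂Q) ^ 2) *
        exp (-(t * (m ⬝ᵥ v)) + t ^ 2 * (τ + m ⬝ᵥ m) / 2) +
      (2 * (∑ i, m i * ∫ x, (x i - m i) * shiftDensity (t • x) v ∂Q) +
        m ⬝ᵥ m * evidence Q t v)) ∂stdGauss n =
      (∫ v, (∑ i, (∫ x, (x i - m i) * shiftDensity (t • x) v ∂Q) ^ 2) *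
        exp (-(t * (m ⬝ᵥ v)) + t ^ 2 * (τ + m ⬝ᵥ m) / 2) ∂stdGauss n) + m ⬝ᵥ m := by
    rw [integral_add hAi hrest, integral_add (hlinA.const_mul 2)
      ((integrable_evidence Q t).const_mul _), integral_const_mul, integral_const_mul, hlinA0,
      integral_evidence]
    ring
  have hgain := exp_mul_sq_integral_le (Q := Q) hs (by fun_prop) (by fun_prop) ha0 hr0 hb0 hrab
    (by linarith) (by linarith) hexp
  have hmm : m ⬝ᵥ m = ∑ i, (∫ x, x i ∂Q) ^ 2 := by simp only [dotProduct, pow_two, hm]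
  calc ∫ v, postEnergy Q t v ∂stdGauss n ≤ _ := hmain
    _ = _ := hsum
    _ ≤ _ := by
      rw [← hmm]
      have := mul_le_mul_of_nonneg_left hgain hs.le
      linarith

/-- The posterior distribution of `x ∼ P` given the observation `y` of `a • x + z`. -/
def gaussPosterior {n : ℕ} (P : Measure (Fin n → ℝ)) (a : ℝ) (y : Fin n → ℝ) :
    Measure (Fin n → ℝ) :=
  P.tilted fun x => (a • x) ⬝ᵥ y - (a • x) ⬝ᵥ (a • x) / 2

instance {n : ℕ} (P : Measure (Fin n → ℝ)) [IsProbabilityMeasure P] (a : ℝ) (y : Fin n → ℝ) :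
    IsProbabilityMeasure (gaussPosterior P a y) :=
  isProbabilityMeasure_tilted (integrable_shiftDensity_smul P a y)

lemma integral_posterior {n : ℕ} (P : Measure (Fin n → ℝ)) (a : ℝ) (y : Fin n → ℝ)
    (g : (Fin n → ℝ) → ℝ) :
    ∫ x, g x ∂gaussPosterior P a y = (∫ x, g x * shiftDensity (a • x) y ∂P) / evidence P a y := by
  rw [gaussPosterior, integral_tilted, ← integral_div]
  congr 1
  funext x
  change shiftDensity (a • x) y / evidence P a y * g x = _
  ring

lemma integrable_posterior {n : ℕ} (P : Measure (Fin n → ℝ)) [IsFiniteMeasure P] (a : ℝ)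
    (y : Fin n → ℝ) {g : (Fin n → ℝ) → ℝ}
    (hg : Integrable (fun x => g x * shiftDensity (a • x) y) P) :
    Integrable g (gaussPosterior P a y) := by
  rw [gaussPosterior, integrable_tilted_iff (integrable_shiftDensity_smul P a y)]
  refine hg.congr (Filter.Eventually.of_forall fun x => ?_)
  simp only [smul_eq_mul, shiftDensity, mul_comm]

lemma shiftDensity_mul_shiftDensity {n : ℕ} {a t A : ℝ} (hA : 0 < A) (hA2 : A ^ 2 = a ^ 2 + t ^ 2)
    (x y v : Fin n → ℝ) :
    shiftDensity (t • x) v * shiftDensity (a • x) y =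
      shiftDensity (A • x) ((a / A) • y + (t / A) • v) := by
  simp only [shiftDensity, ← exp_add]
  congr 1
  simp only [smul_dotProduct, dotProduct_smul, dotProduct_add, smul_eq_mul]
  field_simp
  rw [hA2]
  ring

lemma evidence_posterior {n : ℕ} (P : Measure (Fin n → ℝ)) {a t A : ℝ} (hA : 0 < A)
    (hA2 : A ^ 2 = a ^ 2 + t ^ 2) (y v : Fin n → ℝ) :
    evidence (gaussPosterior P a y) t v =
      evidence P A ((a / A) • y + (t / A) • v) / evidence P a y := by
  rw [evidence, integral_posterior]
  simp only [shiftDensity_mul_shiftDensity hA hA2, evidence]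

lemma postMoment_posterior {n : ℕ} (P : Measure (Fin n → ℝ)) {a t A : ℝ} (hA : 0 < A)
    (hA2 : A ^ 2 = a ^ 2 + t ^ 2) (y v : Fin n → ℝ) (i : Fin n) :
    postMoment (gaussPosterior P a y) t v i =
      postMoment P A ((a / A) • y + (t / A) • v) i / evidence P a y := by
  rw [postMoment, integral_posterior]
  simp only [mul_assoc, shiftDensity_mul_shiftDensity hA hA2, postMoment]

lemma postEnergy_posterior {n : ℕ} (P : Measure (Fin n → ℝ)) [IsProbabilityMeasure P] {a t A : ℝ}
    (hA : 0 < A) (hA2 : A ^ 2 = a ^ 2 + t ^ 2) (y v : Fin n → ℝ) :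
    evidence P a y * postEnergy (gaussPosterior P a y) t v =
      postEnergy P A ((a / A) • y + (t / A) • v) := by
  have h1 := evidence_pos P a y
  have h2 := evidence_pos P A ((a / A) • y + (t / A) • v)
  simp only [postEnergy, evidence_posterior P hA hA2, postMoment_posterior P hA hA2, div_pow,
    ← Finset.sum_div]
  field_simp

lemma sum_sq_integral_posterior {n : ℕ} (P : Measure (Fin n → ℝ)) [IsProbabilityMeasure P] (a : ℝ)
    (y : Fin n → ℝ) :
    evidence P a y * ∑ i, (∫ x, x i ∂gaussPosterior P a y) ^ 2 = postEnergy P a y := by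
  have h1 := evidence_pos P a y
  simp only [integral_posterior, div_pow, ← Finset.sum_div, postEnergy, postMoment]
  field_simp

lemma sq_postMoment_le {n : ℕ} {P : Measure (Fin n → ℝ)} [IsProbabilityMeasure P] {i : Fin n}
    (hi : Integrable (fun x => x i) P) (hi2 : Integrable (fun x => x i ^ 2) P) (t : ℝ)
    (y : Fin n → ℝ) :
    postMoment P t y i ^ 2 ≤ (∫ x, x i ^ 2 * shiftDensity (t • x) y ∂P) * evidence P t y := by
  set p := evidence P t y with hp
  have hp0 : 0 < p := evidence_pos P t y
  set N := postMoment P t y i with hN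
  have h : 0 ≤ ∫ x, (p ^ 2 * (x i ^ 2 * shiftDensity (t • x) y) -
      2 * p * N * (x i * shiftDensity (t • x) y) + N ^ 2 * shiftDensity (t • x) y) ∂P :=
    integral_nonneg fun x => by
      have := mul_nonneg (sq_nonneg (p * x i - N)) (shiftDensity_pos (t • x) y).le
      simp only [Pi.zero_apply]
      linarith
  have i2 := (integrable_mul_shiftDensity hi2 t y).const_mul (p ^ 2)
  have i1 := (integrable_mul_shiftDensity hi t y).const_mul (2 * p * N)
  have i0 := (integrable_shiftDensity_smul P t y).const_mul (N ^ 2)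
  have i21 : Integrable (fun x => p ^ 2 * (x i ^ 2 * shiftDensity (t • x) y) -
      2 * p * N * (x i * shiftDensity (t • x) y)) P := i2.sub i1
  rw [integral_add i21 i0, integral_sub i2 i1, integral_const_mul, integral_const_mul,
    integral_const_mul] at h
  change 0 ≤ _ - 2 * p * N * N + N ^ 2 * p at h
  refine le_of_mul_le_mul_left ?_ hp0
  linarith

lemma integrable_coord {n : ℕ} {P : Measure (Fin n → ℝ)} [IsProbabilityMeasure P] {i : Fin n}
    (hi2 : Integrable (fun x => x i ^ 2) P) : Integrable (fun x => x i) P := by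
  refine (hi2.add (integrable_const (1 : ℝ))).mono'
    (by fun_prop : Measurable fun x : Fin n → ℝ => x i).aestronglyMeasurable
    (Filter.Eventually.of_forall fun x => ?_)
  simp only [Pi.add_apply, Real.norm_eq_abs]
  rw [abs_le]
  constructor <;> nlinarith [sq_nonneg (x i - 1), sq_nonneg (x i + 1)]

lemma integrable_postEnergy {n : ℕ} {P : Measure (Fin n → ℝ)} [IsProbabilityMeasure P]
    (hi2 : ∀ i, Integrable (fun x => x i ^ 2) P) (t : ℝ) :
    Integrable (postEnergy P t) (stdGauss n) := by
  refine (integrable_finsetSum Finset.univ fun i _ =>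
    integrable_integral_mul_shiftDensity (hi2 i) t).mono'
    (measurable_postEnergy P t).aestronglyMeasurable (Filter.Eventually.of_forall fun y => ?_)
  rw [Real.norm_of_nonneg (postEnergy_nonneg P t y), postEnergy,
    div_le_iff₀ (evidence_pos P t y), Finset.sum_mul]
  exact Finset.sum_le_sum fun i _ => sq_postMoment_le (integrable_coord (hi2 i)) (hi2 i) t y

lemma integrable_shiftDensity_mul {n : ℕ} (x : Fin n → ℝ) {F : (Fin n → ℝ) → ℝ}
    (hF : Integrable F (stdGauss n)) (hFm : Measurable F) :
    Integrable (fun y => F (y - x) * shiftDensity x y) (stdGauss n) ∧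
      ∫ y, F (y - x) * shiftDensity x y ∂stdGauss n = ∫ z, F z ∂stdGauss n := by
  have e : ∀ y, (ENNReal.ofReal (shiftDensity x y)).toReal • F (y - x) =
      F (y - x) * shiftDensity x y := fun y => by
    rw [ENNReal.toReal_ofReal (shiftDensity_pos x y).le, smul_eq_mul, mul_comm]
  have hm : Measurable fun y => F (y - x) := by fun_prop
  constructor
  · simp only [← e]
    rw [← integrable_withDensity_iff_integrable_smul' (by fun_prop)
      (Filter.Eventually.of_forall fun _ => ENNReal.ofReal_lt_top), ← stdGauss_map_add,
      integrable_map_measure hm.aestronglyMeasurable (by fun_prop)]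
    simpa [Function.comp_def] using hF
  · simp only [← e]
    rw [← integral_withDensity_eq_integral_toReal_smul (by fun_prop)
      (Filter.Eventually.of_forall fun _ => ENNReal.ofReal_lt_top), ← stdGauss_map_add,
      integral_map (by fun_prop) hm.aestronglyMeasurable]
    simp

/-- The law of `z = y - a • x` under the joint law of `(x, y)` is standard Gaussian. -/
lemma integrable_prod_noise {n : ℕ} {P : Measure (Fin n → ℝ)} [IsProbabilityMeasure P] (a : ℝ)
    {F : (Fin n → ℝ) → ℝ} (hF : Integrable F (stdGauss n)) (hFm : Measurable F) :
    Integrable (fun y => ∫ x, F (y - a • x) * shiftDensity (a • x) y ∂P) (stdGauss n) ∧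
      ∫ y, ∫ x, F (y - a • x) * shiftDensity (a • x) y ∂P ∂stdGauss n =
        ∫ z, F z ∂stdGauss n := by
  have hm : Measurable (fun p : (Fin n → ℝ) × (Fin n → ℝ) =>
      F (p.1 - a • p.2) * shiftDensity (a • p.2) p.1) := by fun_prop
  have hint : Integrable (fun p : (Fin n → ℝ) × (Fin n → ℝ) =>
      F (p.1 - a • p.2) * shiftDensity (a • p.2) p.1) ((stdGauss n).prod P) := by
    refine (integrable_prod_iff' hm.aestronglyMeasurable).2 ⟨Filter.Eventually.of_forall fun x =>
      (integrable_shiftDensity_mul (a • x) hF hFm).1, ?_⟩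
    simp only [norm_mul, Real.norm_of_nonneg (shiftDensity_pos _ _).le,
      fun x : Fin n → ℝ => (integrable_shiftDensity_mul (a • x) hF.norm hFm.norm).2]
    exact integrable_const _
  refine ⟨hint.integral_prod_left, ?_⟩
  rw [integral_integral_swap hint]
  simp [fun x : Fin n → ℝ => (integrable_shiftDensity_mul (a • x) hF hFm).2]

lemma sq_mul_exp_le {u δ : ℝ} (hu : 0 ≤ u) (hδ : δ ≤ 1 / 160) :
    u ^ 2 * exp (34 * δ * u) ≤ 128 * exp (3 / 8 * u) := by
  have h1 : u ^ 2 ≤ 128 * exp (u / 8) := by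
    have := quadratic_le_exp_of_nonneg (show 0 ≤ u / 8 by positivity)
    nlinarith
  have h2 : exp (34 * δ * u) ≤ exp (u / 4) := exp_le_exp.2 (by nlinarith)
  calc u ^ 2 * exp (34 * δ * u) ≤ (128 * exp (u / 8)) * exp (u / 4) :=
        mul_le_mul h1 h2 (exp_pos _).le (by positivity)
    _ = 128 * exp (3 / 8 * u) := by
        rw [mul_assoc, ← exp_add]
        ring_nf

lemma integrable_sq_mul_exp {n : ℕ} {δ : ℝ} (hδ : δ ≤ 1 / 160) :
    Integrable (fun z => (z ⬝ᵥ z) ^ 2 * exp (34 * δ * (z ⬝ᵥ z))) (stdGauss n) := by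
  refine ((integrable_exp_dotProduct_self (c := 3 / 8) (by norm_num)).const_mul 128).mono'
    (by fun_prop) (Filter.Eventually.of_forall fun z => ?_)
  rw [Real.norm_of_nonneg (by positivity)]
  exact sq_mul_exp_le (dotProduct_self_nonneg' z) hδ

lemma tendsto_integral_sq_mul_exp (n : ℕ) :
    Filter.Tendsto (fun δ : ℝ => ∫ z, (z ⬝ᵥ z) ^ 2 * exp (34 * δ * (z ⬝ᵥ z)) ∂stdGauss n)
      (𝓝 0) (𝓝 (n * (n + 2))) := by
  rw [← integral_dotProduct_self_sq]
  refine tendsto_integral_filter_of_dominated_convergence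
    (fun z => 128 * exp (3 / 8 * (z ⬝ᵥ z))) (Filter.Eventually.of_forall fun δ => by fun_prop) ?_
    ((integrable_exp_dotProduct_self (by norm_num)).const_mul 128)
    (Filter.Eventually.of_forall fun z => ?_)
  · filter_upwards [Iio_mem_nhds (show (0 : ℝ) < 1 / 160 by norm_num)] with δ hδ
    refine Filter.Eventually.of_forall fun z => ?_
    rw [Real.norm_of_nonneg (by positivity)]
    exact sq_mul_exp_le (dotProduct_self_nonneg' z) (le_of_lt hδ)
  · have : Continuous fun δ : ℝ => (z ⬝ᵥ z) ^ 2 * exp (34 * δ * (z ⬝ᵥ z)) := by fun_prop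
    simpa using this.tendsto 0

lemma shiftDensity_eq {n : ℕ} (x y : Fin n → ℝ) :
    shiftDensity x y = exp (y ⬝ᵥ y / 2 - (y - x) ⬝ᵥ (y - x) / 2) := by
  rw [shiftDensity]
  congr 1
  simp only [sub_dotProduct, dotProduct_sub, dotProduct_comm y x]
  ring

/-- Growth of the posterior energy when the signal-to-noise ratio increases from `a ^ 2` to
`a ^ 2 + t ^ 2`. -/
lemma integral_postEnergy_step {n : ℕ} {P : Measure (Fin n → ℝ)} [IsProbabilityMeasure P]
    (hi2 : ∀ i, Integrable (fun x => x i ^ 2) P) {a t A : ℝ} (ha : 0 < a) (ht : 0 < t)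
    (hA : 0 < A) (hA2 : A ^ 2 = a ^ 2 + t ^ 2) (hδ : t ^ 2 / a ^ 2 ≤ 1 / 160) :
    ∫ y, postEnergy P A y ∂stdGauss n ≤ ∫ y, postEnergy P a y ∂stdGauss n +
      t ^ 2 / a ^ 4 *
        ∫ z, (z ⬝ᵥ z) ^ 2 * exp (34 * (t ^ 2 / a ^ 2) * (z ⬝ᵥ z)) ∂stdGauss n := by
  set δ := t ^ 2 / a ^ 2 with hδdef
  set H : (Fin n → ℝ) → ℝ := fun z => (z ⬝ᵥ z) ^ 2 * exp (34 * δ * (z ⬝ᵥ z)) with hH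
  have hHm : Measurable H := by fun_prop
  obtain ⟨hN, hNi⟩ := integrable_prod_noise (P := P) a (integrable_sq_mul_exp (n := n) hδ) hHm
  have hrot : (a / A) ^ 2 + (t / A) ^ 2 = 1 := by
    rw [div_pow, div_pow, ← add_div, hA2, div_self (by positivity)]
  have hmap := stdGauss_prod_map_add (n := n) hrot
  have hE := integrable_postEnergy hi2 A
  rw [← hmap, integrable_map_measure (measurable_postEnergy P A).aestronglyMeasurable
    (by fun_prop)] at hE
  have hG : ∫ y, postEnergy P A y ∂stdGauss n =
      ∫ y, ∫ v, postEnergy P A ((a / A) • y + (t / A) • v) ∂stdGauss n ∂stdGauss n := by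
    conv_lhs => rw [← hmap, integral_map (by fun_prop)
      (measurable_postEnergy P A).aestronglyMeasurable]
    exact integral_prod _ hE
  have hdist : ∀ x y : Fin n → ℝ, (x - a⁻¹ • y) ⬝ᵥ (x - a⁻¹ • y) =
      (y - a • x) ⬝ᵥ (y - a • x) / a ^ 2 := fun x y => by
    rw [show y - a • x = (-a) • (x - a⁻¹ • y) by
      rw [smul_sub, smul_smul, neg_mul, mul_inv_cancel₀ ha.ne']; module]
    rw [smul_dotProduct, dotProduct_smul, smul_eq_mul, smul_eq_mul]
    field_simp
  have hpt : ∀ y, ∫ v, postEnergy P A ((a / A) • y + (t / A) • v) ∂stdGauss n ≤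
      postEnergy P a y +
        t ^ 2 / a ^ 4 * ∫ x, H (y - a • x) * shiftDensity (a • x) y ∂P := fun y => by
    have hp := evidence_pos P a y
    have hexp : Integrable (fun x => exp (40 * t ^ 2 * ((x - a⁻¹ • y) ⬝ᵥ (x - a⁻¹ • y))))
        (gaussPosterior P a y) := by
      refine integrable_posterior P a y ((integrable_const (exp (y ⬝ᵥ y / 2))).mono' (by
        have : Measurable fun x => exp (40 * t ^ 2 * ((x - a⁻¹ • y) ⬝ᵥ (x - a⁻¹ • y))) *
          shiftDensity (a • x) y := by fun_prop
        exact this.aestronglyMeasurable) (Filter.Eventually.of_forall fun x => ?_))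
      rw [Real.norm_of_nonneg (mul_nonneg (exp_pos _).le (shiftDensity_pos _ _).le),
        shiftDensity_eq, ← exp_add, hdist]
      refine exp_le_exp.2 ?_
      have h1 : 40 * t ^ 2 * ((y - a • x) ⬝ᵥ (y - a • x) / a ^ 2) =
          40 * δ * ((y - a • x) ⬝ᵥ (y - a • x)) := by rw [hδdef]; ring
      rw [h1]
      nlinarith [dotProduct_self_nonneg' (y - a • x)]
    have h := mul_le_mul_of_nonneg_left (integral_postEnergy_le ht _ hexp) hp.le
    rw [← integral_const_mul, mul_add, sum_sq_integral_posterior] at h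
    simp only [postEnergy_posterior P hA hA2, integral_posterior] at h
    refine h.trans_eq ?_
    congr 1
    have h2 : ∀ x, ((x - a⁻¹ • y) ⬝ᵥ (x - a⁻¹ • y)) ^ 2 *
        exp (34 * t ^ 2 * ((x - a⁻¹ • y) ⬝ᵥ (x - a⁻¹ • y))) * shiftDensity (a • x) y =
        (a ^ 4)⁻¹ * (H (y - a • x) * shiftDensity (a • x) y) := fun x => by
      rw [hdist, hH, hδdef]
      simp only
      rw [show 34 * t ^ 2 * ((y - a • x) ⬝ᵥ (y - a • x) / a ^ 2) =
        34 * (t ^ 2 / a ^ 2) * ((y - a • x) ⬝ᵥ (y - a • x)) by ring]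
      ring
    simp only [h2, integral_const_mul]
    field_simp
  have hR : Integrable (fun y => t ^ 2 / a ^ 4 *
      ∫ x, H (y - a • x) * shiftDensity (a • x) y ∂P) (stdGauss n) := hN.const_mul _
  rw [hG]
  refine (integral_mono hE.integral_prod_left
    ((integrable_postEnergy hi2 a).add hR) hpt).trans_eq ?_
  rw [← hNi, ← integral_const_mul]
  exact integral_add (integrable_postEnergy hi2 a) hR

/-- The posterior energy satisfies the D-bound. -/
lemma integral_postEnergy_le_add {n : ℕ} {P : Measure (Fin n → ℝ)} [IsProbabilityMeasure P]
    (hi2 : ∀ i, Integrable (fun x => x i ^ 2) P) {σ σ₀ : ℝ} (hσ : 0 < σ) (hle : σ < σ₀) :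
    ∫ y, postEnergy P (√σ₀) y ∂stdGauss n ≤ ∫ y, postEnergy P (√σ) y ∂stdGauss n +
      n * (n + 2) * (1 / σ - 1 / σ₀) := by
  set Φ : ℝ → ℝ := fun δ => ∫ z, (z ⬝ᵥ z) ^ 2 * exp (34 * δ * (z ⬝ᵥ z)) ∂stdGauss n with hΦ
  set E : ℝ → ℝ := fun s => ∫ y, postEnergy P (√s) y ∂stdGauss n with hE
  have step : ∀ s r, 0 < s → 1 < r → r - 1 ≤ 1 / 160 →
      E (s * r) ≤ E s + (1 / s - 1 / (s * r)) * (r * Φ (r - 1)) := fun s r hs hr hr' => by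
    have hq : 0 < s * (r - 1) := mul_pos hs (by linarith)
    have h := integral_postEnergy_step hi2 (a := √s) (t := √(s * (r - 1))) (A := √(s * r))
      (sqrt_pos.2 hs) (sqrt_pos.2 hq) (sqrt_pos.2 (by positivity)) (by
        rw [sq_sqrt (by positivity), sq_sqrt hs.le, sq_sqrt hq.le]; ring) (by
        rw [sq_sqrt hs.le, sq_sqrt hq.le, mul_div_cancel_left₀ _ hs.ne']; exact hr')
    have e4 : √s ^ 4 = s ^ 2 := by
      rw [show √s ^ 4 = (√s ^ 2) ^ 2 by ring, sq_sqrt hs.le]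
    rw [e4, sq_sqrt hs.le, sq_sqrt hq.le, mul_div_cancel_left₀ _ hs.ne'] at h
    refine h.trans_eq ?_
    simp only [hE, hΦ]
    rw [← mul_assoc]
    congr 2
    have : r ≠ 0 := by positivity
    field_simp
  have tele : ∀ r, 1 < r → r - 1 ≤ 1 / 160 → ∀ k : ℕ,
      E (σ * r ^ k) ≤ E σ + (1 / σ - 1 / (σ * r ^ k)) * (r * Φ (r - 1)) := fun r hr hr' k => by
    induction k with
    | zero => simp
    | succ k ih =>
      have h := step (σ * r ^ k) r (by positivity) hr hr'
      rw [mul_assoc, ← pow_succ] at h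
      linarith
  set L := log (σ₀ / σ) with hL
  have hL0 : 0 < L := log_pos (by rwa [one_lt_div hσ])
  have hlim : Filter.Tendsto (fun k : ℕ => exp (L / (k + 1 : ℕ))) Filter.atTop (𝓝 1) := by
    have h1 : Filter.Tendsto (fun k : ℕ => L / (k + 1 : ℕ)) Filter.atTop (𝓝 0) :=
      (tendsto_const_div_atTop_nhds_zero_nat L).comp (Filter.tendsto_add_atTop_nat 1)
    simpa [Function.comp_def] using (continuous_exp.tendsto 0).comp h1
  have hlim' : Filter.Tendsto (fun k : ℕ => exp (L / (k + 1 : ℕ)) - 1) Filter.atTop (𝓝 0) := by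
    simpa using hlim.sub_const 1
  have hlimΦ : Filter.Tendsto (fun k : ℕ => E σ + (1 / σ - 1 / σ₀) *
      (exp (L / (k + 1 : ℕ)) * Φ (exp (L / (k + 1 : ℕ)) - 1))) Filter.atTop
      (𝓝 (E σ + (1 / σ - 1 / σ₀) * (1 * (n * (n + 2))))) :=
    ((hlim.mul ((tendsto_integral_sq_mul_exp n).comp hlim')).const_mul _).const_add _
  have hfin := ge_of_tendsto hlimΦ (b := E σ₀) (by
    filter_upwards [hlim'.eventually (Iio_mem_nhds (show (0 : ℝ) < 1 / 160 by norm_num))] with k hk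
    have h := tele (exp (L / (k + 1 : ℕ))) (one_lt_exp_iff.2 (by positivity)) (le_of_lt hk) (k + 1)
    have e : σ * exp (L / (k + 1 : ℕ)) ^ (k + 1) = σ₀ := by
      rw [← exp_nat_mul, mul_div_cancel₀ _ (by positivity), hL,
        exp_log (div_pos (hσ.trans hle) hσ)]
      field_simp
    rwa [e] at h)
  linarith

lemma measurable_obs {Ω : Type*} [MeasurableSpace Ω] {n : ℕ} {X Z : Ω → Fin n → ℝ}
    (hX : Measurable X) (hZ : Measurable Z) (snr : ℝ) : Measurable (obs X Z snr) := by
  unfold obs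
  fun_prop

/-- The joint law of the observation and the signal. -/
lemma map_obs_prod {Ω : Type*} [MeasurableSpace Ω] {μ : Measure Ω} [IsProbabilityMeasure μ]
    {n : ℕ} {X Z : Ω → Fin n → ℝ} (hX : Measurable X) (hZ : Measurable Z)
    (hZlaw : μ.map Z = stdGauss n) (hindep : IndepFun X Z μ) (snr : ℝ) :
    μ.map (fun ω => (obs X Z snr ω, X ω)) = ((stdGauss n).prod (μ.map X)).withDensity
      fun p => ENNReal.ofReal (shiftDensity (√snr • p.2) p.1) := by
  have hY := measurable_obs hX hZ snr
  have hXZ := (indepFun_iff_map_prod_eq_prod_map_map hX.aemeasurable hZ.aemeasurable).1 hindep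
  rw [hZlaw] at hXZ
  have hP : IsProbabilityMeasure (μ.map X) := Measure.isProbabilityMeasure_map hX.aemeasurable
  refine Measure.ext_of_lintegral _ fun F hF => ?_
  rw [lintegral_map hF (by fun_prop), lintegral_withDensity_eq_lintegral_mul _ (by fun_prop) hF,
    lintegral_prod_symm _ (by fun_prop)]
  have h1 : ∫⁻ ω, F (obs X Z snr ω, X ω) ∂μ =
      ∫⁻ p, F (√snr • p.1 + p.2, p.1) ∂(μ.map X).prod (stdGauss n) := by
    rw [← hXZ, lintegral_map (by fun_prop) (by fun_prop)]
    rfl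
  rw [h1, lintegral_prod _ (by fun_prop)]
  refine lintegral_congr fun x => ?_
  exact (lintegral_shiftDensity_mul (√snr • x) (F := fun y => F (y, x)) (by fun_prop)).symm

section Channel

variable {Ω : Type*} [MeasurableSpace Ω] {μ : Measure Ω} [IsProbabilityMeasure μ]
  {n : ℕ} {X Z : Ω → Fin n → ℝ}

lemma integral_obs_mul (hX : Measurable X) (hZ : Measurable Z)
    (hZlaw : μ.map Z = stdGauss n) (hindep : IndepFun X Z μ) (snr : ℝ)
    {h k : (Fin n → ℝ) → ℝ} (hh : Measurable h) (hk : Measurable k)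
    (hi : Integrable (fun ω => h (obs X Z snr ω) * k (X ω)) μ) :
    ∫ ω, h (obs X Z snr ω) * k (X ω) ∂μ =
      ∫ y, h y * ∫ x, k x * shiftDensity (√snr • x) y ∂(μ.map X) ∂stdGauss n := by
  have hP : IsProbabilityMeasure (μ.map X) := Measure.isProbabilityMeasure_map hX.aemeasurable
  have hY := measurable_obs hX hZ snr
  have hm : Measurable fun p : (Fin n → ℝ) × (Fin n → ℝ) => h p.1 * k p.2 := by fun_prop
  have hmap := map_obs_prod hX hZ hZlaw hindep snr
  have hd : Measurable fun p : (Fin n → ℝ) × (Fin n → ℝ) =>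
      ENNReal.ofReal (shiftDensity (√snr • p.2) p.1) := by fun_prop
  have e : ∀ p : (Fin n → ℝ) × (Fin n → ℝ),
      (ENNReal.ofReal (shiftDensity (√snr • p.2) p.1)).toReal • (h p.1 * k p.2) =
        h p.1 * (k p.2 * shiftDensity (√snr • p.2) p.1) := fun p => by
    rw [ENNReal.toReal_ofReal (shiftDensity_pos _ _).le, smul_eq_mul]
    ring
  have hi' : Integrable (fun p : (Fin n → ℝ) × (Fin n → ℝ) => h p.1 * k p.2)
      (μ.map fun ω => (obs X Z snr ω, X ω)) :=
    (integrable_map_measure hm.aestronglyMeasurable (by fun_prop)).2 hi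
  rw [hmap, integrable_withDensity_iff_integrable_smul' hd
    (Filter.Eventually.of_forall fun _ => ENNReal.ofReal_lt_top)] at hi'
  simp only [e] at hi'
  rw [← integral_map (φ := fun ω => (obs X Z snr ω, X ω))
    (f := fun p : (Fin n → ℝ) × (Fin n → ℝ) => h p.1 * k p.2) (by fun_prop)
    hm.aestronglyMeasurable, hmap, integral_withDensity_eq_integral_toReal_smul hd
    (Filter.Eventually.of_forall fun _ => ENNReal.ofReal_lt_top)]
  simp only [e]
  rw [integral_prod _ hi']
  simp only [integral_const_mul]

lemma integrable_obs (hX : Measurable X) (hZ : Measurable Z)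
    (hZlaw : μ.map Z = stdGauss n) (hindep : IndepFun X Z μ) (snr : ℝ)
    {h : (Fin n → ℝ) → ℝ} (hh : Measurable h)
    (hi : Integrable (fun y => h y * evidence (μ.map X) (√snr) y) (stdGauss n)) :
    Integrable (fun ω => h (obs X Z snr ω)) μ := by
  have hP : IsProbabilityMeasure (μ.map X) := Measure.isProbabilityMeasure_map hX.aemeasurable
  have hY := measurable_obs hX hZ snr
  have hm : Measurable fun p : (Fin n → ℝ) × (Fin n → ℝ) => h p.1 := by fun_prop
  suffices Integrable (fun p : (Fin n → ℝ) × (Fin n → ℝ) => h p.1)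
      (μ.map fun ω => (obs X Z snr ω, X ω)) from
    (integrable_map_measure hm.aestronglyMeasurable (by fun_prop)).1 this
  rw [map_obs_prod hX hZ hZlaw hindep snr, integrable_withDensity_iff_integrable_smul'
    (by fun_prop) (Filter.Eventually.of_forall fun _ => ENNReal.ofReal_lt_top)]
  have e : ∀ p : (Fin n → ℝ) × (Fin n → ℝ),
      (ENNReal.ofReal (shiftDensity (√snr • p.2) p.1)).toReal • h p.1 =
        h p.1 * shiftDensity (√snr • p.2) p.1 := fun p => by
    rw [ENNReal.toReal_ofReal (shiftDensity_pos _ _).le, smul_eq_mul, mul_comm]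
  simp only [e]
  have hm' : Measurable fun p : (Fin n → ℝ) × (Fin n → ℝ) =>
      h p.1 * shiftDensity (√snr • p.2) p.1 := by fun_prop
  refine (integrable_prod_iff hm'.aestronglyMeasurable).2 ⟨Filter.Eventually.of_forall fun y =>
    (integrable_shiftDensity_smul (μ.map X) (√snr) y).const_mul (h y), ?_⟩
  simp only [norm_mul, Real.norm_of_nonneg (shiftDensity_pos _ _).le, integral_const_mul]
  refine hi.norm.congr (Filter.Eventually.of_forall fun y => ?_)
  simp only [norm_mul, Real.norm_of_nonneg (evidence_pos (μ.map X) (√snr) y).le]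
  rfl

/-- The posterior mean is a version of the conditional expectation. -/
lemma condExp_ae_eq (hX : Measurable X) (hZ : Measurable Z)
    (hZlaw : μ.map Z = stdGauss n) (hindep : IndepFun X Z μ) (snr : ℝ) (i : Fin n)
    (hi : Integrable (fun ω => X ω i) μ) :
    μ[fun ω => X ω i | obsSigma X Z snr] =ᵐ[μ] fun ω =>
      postMoment (μ.map X) (√snr) (obs X Z snr ω) i /
        evidence (μ.map X) (√snr) (obs X Z snr ω) := by
  have hP : IsProbabilityMeasure (μ.map X) := Measure.isProbabilityMeasure_map hX.aemeasurable
  have hY := measurable_obs hX hZ snr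
  have hle : obsSigma X Z snr ≤ ‹MeasurableSpace Ω› := hY.comap_le
  set g : (Fin n → ℝ) → ℝ := fun y =>
    postMoment (μ.map X) (√snr) y i / evidence (μ.map X) (√snr) y with hg
  have hgm : Measurable g := (measurable_postMoment _ _ i).div (measurable_evidence _ _)
  have hge : ∀ y, g y * evidence (μ.map X) (√snr) y = postMoment (μ.map X) (√snr) y i :=
    fun y => div_mul_cancel₀ _ (evidence_pos _ _ _).ne'
  have hiP : Integrable (fun x => x i) (μ.map X) :=
    (integrable_map_measure (by fun_prop : Measurable fun x : Fin n → ℝ =>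
      x i).aestronglyMeasurable hX.aemeasurable).2 hi
  have hgi : Integrable (fun ω => g (obs X Z snr ω)) μ := by
    refine integrable_obs hX hZ hZlaw hindep snr hgm ?_
    simp only [hge]
    exact integrable_integral_mul_shiftDensity hiP _
  refine (ae_eq_condExp_of_forall_setIntegral_eq hle hi (fun s _ _ => hgi.integrableOn) ?_
    ?_).symm
  · rintro s ⟨B, hB, rfl⟩ -
    have hs : MeasurableSet (obs X Z snr ⁻¹' B) := hY hB
    have hBm : Measurable (B.indicator (1 : (Fin n → ℝ) → ℝ)) := measurable_one.indicator hB
    have ind : ∀ f : Ω → ℝ, (obs X Z snr ⁻¹' B).indicator f = fun ω =>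
        B.indicator (1 : (Fin n → ℝ) → ℝ) (obs X Z snr ω) * f ω := fun f => by
      funext ω
      by_cases h : obs X Z snr ω ∈ B <;> simp [h]
    rw [← integral_indicator hs, ← integral_indicator hs]
    have i1 := hgi.indicator hs
    have i2 := hi.indicator hs
    rw [ind] at i1 i2 ⊢
    rw [ind]
    rw [integral_obs_mul hX hZ hZlaw hindep snr (k := fun x => x i) hBm (by fun_prop) i2]
    have := integral_obs_mul hX hZ hZlaw hindep snr
      (h := fun y => B.indicator (1 : (Fin n → ℝ) → ℝ) y * g y) (k := fun _ => 1)
      (hBm.mul hgm) measurable_const (by simpa only [mul_one] using i1)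
    simp only [mul_one, one_mul] at this
    rw [this]
    refine integral_congr_ae (Filter.Eventually.of_forall fun y => ?_)
    simp only [mul_assoc]
    exact congrArg _ (hge y)
  · exact (hgm.stronglyMeasurable.comp_measurable
      (comap_measurable (obs X Z snr))).aestronglyMeasurable

lemma mmseV_eq (hX : Measurable X) (hZ : Measurable Z)
    (hZlaw : μ.map Z = stdGauss n) (hindep : IndepFun X Z μ)
    (hX2 : ∀ i, Integrable (fun ω => X ω i ^ 2) μ) (snr : ℝ) :
    mmseV μ X Z snr = 1 / n * ((∑ i, ∫ ω, X ω i ^ 2 ∂μ) -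
      ∫ y, postEnergy (μ.map X) (√snr) y ∂stdGauss n) := by
  have hP : IsProbabilityMeasure (μ.map X) := Measure.isProbabilityMeasure_map hX.aemeasurable
  have hi2P : ∀ i, Integrable (fun x => x i ^ 2) (μ.map X) := fun i =>
    (integrable_map_measure (by fun_prop : Measurable fun x : Fin n → ℝ =>
      x i ^ 2).aestronglyMeasurable hX.aemeasurable).2 (hX2 i)
  have hi : ∀ i, Integrable (fun ω => X ω i) μ := fun i =>
    (integrable_map_measure (by fun_prop : Measurable fun x : Fin n → ℝ =>
      x i).aestronglyMeasurable hX.aemeasurable).1 (integrable_coord (hi2P i))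
  set p := evidence (μ.map X) (√snr) with hp
  have hp0 : ∀ y, 0 < p y := fun y => evidence_pos _ _ _
  set N := postMoment (μ.map X) (√snr) with hN
  set g : Fin n → (Fin n → ℝ) → ℝ := fun i y => N y i / p y with hg
  have hNm : ∀ i, Measurable fun y => N y i := fun i => measurable_postMoment _ _ i
  have hgm : ∀ i, Measurable (g i) := fun i => (hNm i).div (measurable_evidence _ _)
  have hE : ∀ i, Integrable (fun y => N y i ^ 2 / p y) (stdGauss n) := fun i => by
    refine (integrable_postEnergy hi2P (√snr)).mono'
      (((hNm i).pow_const 2).div (measurable_evidence _ _)).aestronglyMeasurable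
      (Filter.Eventually.of_forall fun y => ?_)
    rw [Real.norm_of_nonneg (div_nonneg (sq_nonneg _) (hp0 y).le)]
    exact div_le_div_of_nonneg_right (Finset.single_le_sum (f := fun j => N y j ^ 2)
      (fun j _ => sq_nonneg _) (Finset.mem_univ i)) (hp0 y).le
  have hg2 : ∀ i, Integrable (fun ω => g i (obs X Z snr ω) ^ 2) μ := fun i => by
    refine integrable_obs hX hZ hZlaw hindep snr ((hgm i).pow_const 2) ((hE i).congr
      (Filter.Eventually.of_forall fun y => ?_))
    have := (hp0 y).ne'
    simp only [hg, ← hp]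
    field_simp
  have hY := measurable_obs hX hZ snr
  have hgX : ∀ i, Integrable (fun ω => g i (obs X Z snr ω) * X ω i) μ := fun i => by
    have hm : Measurable fun ω => g i (obs X Z snr ω) * X ω i :=
      ((hgm i).comp hY).mul ((measurable_pi_apply i).comp hX)
    refine ((hg2 i).add (hX2 i)).mono' hm.aestronglyMeasurable
      (Filter.Eventually.of_forall fun ω => ?_)
    simp only [Pi.add_apply, Real.norm_eq_abs]
    rw [abs_le]
    constructor <;> nlinarith [sq_nonneg (g i (obs X Z snr ω) - X ω i),
      sq_nonneg (g i (obs X Z snr ω) + X ω i), sq_nonneg (g i (obs X Z snr ω)),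
      sq_nonneg (X ω i)]
  have v1 : ∀ i, ∫ ω, g i (obs X Z snr ω) * X ω i ∂μ = ∫ y, N y i ^ 2 / p y ∂stdGauss n :=
    fun i => by
      rw [integral_obs_mul hX hZ hZlaw hindep snr (k := fun x => x i) (hgm i) (by fun_prop)
        (hgX i)]
      refine integral_congr_ae (Filter.Eventually.of_forall fun y => ?_)
      change N y i / p y * N y i = _
      ring
  have v2 : ∀ i, ∫ ω, g i (obs X Z snr ω) ^ 2 ∂μ = ∫ y, N y i ^ 2 / p y ∂stdGauss n :=
    fun i => by
      have := integral_obs_mul hX hZ hZlaw hindep snr (h := fun y => g i y ^ 2)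
        (k := fun _ => 1) ((hgm i).pow_const 2) measurable_const
        (by simpa only [mul_one] using hg2 i)
      simp only [mul_one, one_mul] at this
      rw [this]
      refine integral_congr_ae (Filter.Eventually.of_forall fun y => ?_)
      change (N y i / p y) ^ 2 * p y = _
      have := (hp0 y).ne'
      field_simp
  have hce : ∀ᵐ ω ∂μ, ∀ i, ceVec μ (obsSigma X Z snr) X ω i = g i (obs X Z snr ω) :=
    ae_all_iff.2 fun i => condExp_ae_eq hX hZ hZlaw hindep snr i (hi i)
  have hsq : ∀ i, Integrable (fun ω => X ω i ^ 2 - 2 * (g i (obs X Z snr ω) * X ω i)) μ :=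
    fun i => (hX2 i).sub ((hgX i).const_mul 2)
  rw [mmseV]
  congr 1
  have h1 : ∫ ω, ∑ i, (X ω i - ceVec μ (obsSigma X Z snr) X ω i) ^ 2 ∂μ =
      ∫ ω, ∑ i, (X ω i ^ 2 - 2 * (g i (obs X Z snr ω) * X ω i) +
        g i (obs X Z snr ω) ^ 2) ∂μ := by
    refine integral_congr_ae ?_
    filter_upwards [hce] with ω hω
    refine Finset.sum_congr rfl fun i _ => ?_
    rw [hω i]
    ring
  have hsum : ∀ i, Integrable (fun ω => X ω i ^ 2 - 2 * (g i (obs X Z snr ω) * X ω i) +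
      g i (obs X Z snr ω) ^ 2) μ := fun i => (hsq i).add (hg2 i)
  rw [h1, integral_finsetSum _ fun i _ => hsum i]
  have h2 : ∫ y, postEnergy (μ.map X) (√snr) y ∂stdGauss n =
      ∑ i, ∫ y, N y i ^ 2 / p y ∂stdGauss n := by
    rw [← integral_finsetSum _ fun i _ => hE i]
    simp only [← Finset.sum_div]
    rfl
  rw [h2, ← Finset.sum_sub_distrib]
  refine Finset.sum_congr rfl fun i _ => ?_
  rw [integral_add (hsq i) (hg2 i), integral_sub (hX2 i) ((hgX i).const_mul 2),
    integral_const_mul, v1, v2]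
  ring

end Channel

/-- **Theorem 1 (D-bound, no power constraint).** For every `n ≥ 1`, every random vector `X`
in `ℝⁿ` with `E[‖X‖²] < ∞`, and all `0 < snr ≤ snr0`,
`mmse(X, snr) ≤ mmse(X, snr0) + (n+2)·(1/snr − 1/snr0)`. -/
theorem dBound_no_power {Ω : Type*} [MeasurableSpace Ω] (μ : Measure Ω) [IsProbabilityMeasure μ]
    (n : ℕ) (hn : 1 ≤ n) (X Z : Ω → Fin n → ℝ)
    (hX : Measurable X) (hZ : Measurable Z)
    (hZlaw : Measure.map Z μ = Measure.pi fun _ : Fin n => gaussianReal 0 1)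
    (hindep : IndepFun X Z μ)
    (hX2 : Integrable (fun ω => ∑ i, (X ω i) ^ 2) μ)
    (snr snr0 : ℝ) (hsnr : 0 < snr) (hle : snr ≤ snr0) :
    mmseV μ X Z snr ≤ mmseV μ X Z snr0 + ((n : ℝ) + 2) * (1 / snr - 1 / snr0) := by
  rcases hle.eq_or_lt with rfl | hlt
  · simp
  have hP : IsProbabilityMeasure (μ.map X) := Measure.isProbabilityMeasure_map hX.aemeasurable
  have hi2 : ∀ i, Integrable (fun ω => X ω i ^ 2) μ := fun i => by
    refine hX2.mono' (by fun_prop : Measurable fun ω => X ω i ^ 2).aestronglyMeasurable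
      (Filter.Eventually.of_forall fun ω => ?_)
    rw [Real.norm_of_nonneg (sq_nonneg _)]
    exact Finset.single_le_sum (f := fun j => X ω j ^ 2) (fun j _ => sq_nonneg _)
      (Finset.mem_univ i)
  have hi2P : ∀ i, Integrable (fun x => x i ^ 2) (μ.map X) := fun i =>
    (integrable_map_measure (by fun_prop : Measurable fun x : Fin n → ℝ =>
      x i ^ 2).aestronglyMeasurable hX.aemeasurable).2 (hi2 i)
  have h := integral_postEnergy_le_add hi2P hsnr hlt
  rw [mmseV_eq hX hZ hZlaw hindep hi2, mmseV_eq hX hZ hZlaw hindep hi2]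
  have hn0 : (0 : ℝ) < n := by exact_mod_cast hn
  rw [← sub_nonneg] at h ⊢
  have := mul_nonneg (show 0 ≤ 1 / (n : ℝ) by positivity) h
  refine this.trans_eq ?_
  field_simp
  ring

end
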